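/- (Lemma 7.3) Fix m ≥ 1. Let K_m^{GL_l} = I_l + p^m·M_l(ℤ_p), K⁺ = K_m^{GL_l} ∩ {unipotent upper triangular matrices}, K⁻ = K_m^{GL_l} ∩ {unipotent lower triangular matrices}, K_m^{SO_{2l+1}} = (I_{2l+1} + p^m·M_{2l+1}(ℤ_p)) ∩ SO_{2l+1}(ℚ_p), and K_m' = {k ∈ K_m : j(k) ∈ (Q_l ∩ K_m^{SO_{2l+1}}) ∪ (Q̄_l ∩ K_m^{SO_{2l+1}})}. Then: (1) for every k' ∈ K⁺ there exist k ∈ K_m' and v ∈ V_l ∩ K_m^{SO_{2l+1}} such that j(k) = l_l(k')·v; (2) for every k' ∈ K⁻ there exist k ∈ K_m' and v̄ ∈ V̄_l ∩ K_m^{SO_{2l+1}} such that j(k) = l_l(k')·v̄; (3) for every a ∈ I_{l-1} + p^m·M_{l-1}(ℤ_p), the matrix diag(a, 1, 1, J_{l-1}·ᵀa^{-1}·J_{l-1}) lies in K_m' and j(diag(a, 1, 1, J_{l-1}·ᵀa^{-1}·J_{l-1})) = l_l(diag(a,1)). -/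

import Mathlib

/-!
Write `w = e_l + (ρ/2) e_{l+2}` (one-indexed; `wvec`). The matrix `M` carries the form `J_{2l+1}`
to the form `jhat`, which is `J_{2l,ρ}` on the first and last `l` coordinates plus an orthogonal
middle line of value `ρ`, and it carries `w` to the middle basis vector. Hence every
isometry of `J_{2l+1}` that fixes `w` has the shape `j(k)` (`exists_jmap`). As `p` is odd and
`ρ` is a unit, `M` and `M⁻¹` are integral, so `k` is congruent to `1` modulo `p^m` as soon as
`j(k)` is (`km_of_jmap`).

Given `k'` unipotent and congruent to `1`, put `u = l_l(k')⁻¹ w - w`, which is divisible by `p^m`.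
If `k'` is upper triangular, its last row is a basis vector, and `u` is supported on the first
`l - 1` coordinates; if `k'` is lower triangular, its last column is a basis vector, and `u` is
supported on the last `l - 1` coordinates. In either case `u` and `e_l` respectively
`e_{l+2}` span a totally isotropic subspace, and the Siegel transvection built from
these two vectors (`transv`) is an isometry which maps `w` to `w + u`. It lies in `V_l`
respectively in its opposite, and `l_l(k') v` fixes `w`, so it is `j(k)` for some `k`
(`exists_of_transv`). In the lower case, membership in the opposite parabolic needs the unipotent
factor on the left, which is obtained by conjugating with the Levi element (`bar_conj`).

Determinants take care of themselves: an isometry has determinant `±1`, and congruence to `1`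
modulo an odd prime leaves only `1` (`so2l1_of_close`).

For the Levi statement, `ĝ` for `g = diag(a, 1, 1, a*)` is `l_l(diag(a, 1))`, which is trivial on
the three coordinates on which `M` acts, so it commutes with `M` (`comm_mmat`, `jmap_dmat`).
-/

open Matrix BigOperators

noncomputable section

/-- Entry of a square matrix read with 0-indexed natural-number indices (`0` out of range). -/
def ent {F : Type*} [Field F] {N : ℕ} (g : Matrix (Fin N) (Fin N) F) (i j : ℕ) : F :=
  if h : i < N ∧ j < N then g ⟨i, h.1⟩ ⟨j, h.2⟩ else 0

/-- The antidiagonal matrix `J_n` (entry `(i,j)` is `1` iff `i+j = n+1` in 1-indexed terms). -/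
def Jmat (F : Type*) [Field F] (n : ℕ) : Matrix (Fin n) (Fin n) F :=
  Matrix.of fun i j => if (i : ℕ) + (j : ℕ) + 1 = n then 1 else 0

/-- `J_{2l,ρ} = diag(I_{l-1}, [[0,1],[-ρ,0]], I_{l-1}) · J_{2l}`. -/
def Jrho (F : Type*) [Field F] (l : ℕ) (ρ : F) : Matrix (Fin (2*l)) (Fin (2*l)) F :=
  (Matrix.of fun i j : Fin (2*l) =>
    if (i : ℕ) = l - 1 ∧ (j : ℕ) = l then 1
    else if (i : ℕ) = l ∧ (j : ℕ) = l - 1 then -ρ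
    else if i = j ∧ ((i : ℕ) < l - 1 ∨ l + 1 ≤ (i : ℕ)) then 1
    else 0) * Jmat F (2*l)

/-- Membership in the quasi-split even special orthogonal group `SO_{2l}(J_{2l,ρ})`. -/
def SO2l {F : Type*} [Field F] (l : ℕ) (ρ : F) (g : Matrix (Fin (2*l)) (Fin (2*l)) F) : Prop :=
  g.det = 1 ∧ gᵀ * Jrho F l ρ * g = Jrho F l ρ

/-- Membership in `U_{SO_{2l}}`: upper triangular, all diagonal entries `1`, and in `SO_{2l}`. -/
def USO2l {F : Type*} [Field F] (l : ℕ) (ρ : F) (g : Matrix (Fin (2*l)) (Fin (2*l)) F) : Prop :=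
  SO2l l ρ g ∧ (∀ i j : Fin (2*l), (j : ℕ) < (i : ℕ) → g i j = 0) ∧ ∀ i, g i i = 1

/-- Exponent of the diagonal entry of
`e_m = diag(p^{-2m(l-1)}, …, p^{-2m}, 1, 1, p^{2m}, …, p^{2m(l-1)})`. -/
def expo (l m i : ℕ) : ℤ :=
  if i < l - 1 then -((2 * m * (l - 1 - i) : ℕ) : ℤ)
  else if l + 1 ≤ i then ((2 * m * (i - l) : ℕ) : ℤ)
  else 0

/-- The diagonal matrix `e_m`. -/
def emat (p l m : ℕ) [Fact p.Prime] : Matrix (Fin (2*l)) (Fin (2*l)) ℚ_[p] :=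
  Matrix.diagonal fun i => (p : ℚ_[p]) ^ (expo l m (i : ℕ))

/-- The diagonal matrix `e_m⁻¹`. -/
def ematInv (p l m : ℕ) [Fact p.Prime] : Matrix (Fin (2*l)) (Fin (2*l)) ℚ_[p] :=
  Matrix.diagonal fun i => (p : ℚ_[p]) ^ (-(expo l m (i : ℕ)))

/-- Membership in `K_m = (I_{2l} + p^m·M_{2l}(ℤ_p)) ∩ SO_{2l}(J_{2l,ρ})`. -/
def Km (p l m : ℕ) [Fact p.Prime] (ρ : ℚ_[p])
    (g : Matrix (Fin (2*l)) (Fin (2*l)) ℚ_[p]) : Prop :=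
  SO2l l ρ g ∧
    ∀ i j : Fin (2*l), ‖g i j - (if i = j then 1 else 0)‖ ≤ (p : ℝ) ^ (-(m : ℤ))

/-- Membership in `H_m = e_m·K_m·e_m⁻¹`. -/
def Hm (p l m : ℕ) [Fact p.Prime] (ρ : ℚ_[p])
    (h : Matrix (Fin (2*l)) (Fin (2*l)) ℚ_[p]) : Prop :=
  Km p l m ρ (ematInv p l m * h * emat p l m)

/-- Membership in `U_m = U_{SO_{2l}} ∩ H_m`. -/
def Um (p l m : ℕ) [Fact p.Prime] (ρ : ℚ_[p])
    (u : Matrix (Fin (2*l)) (Fin (2*l)) ℚ_[p]) : Prop :=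
  USO2l l ρ u ∧ Hm p l m ρ u

/-- Membership in `SO_{2l+1}(F)` (with respect to the antidiagonal form `J_{2l+1}`). -/
def SO2l1 {F : Type*} [Field F] (l : ℕ) (g : Matrix (Fin (2*l+1)) (Fin (2*l+1)) F) : Prop :=
  g.det = 1 ∧ gᵀ * Jmat F (2*l+1) * g = Jmat F (2*l+1)

/-- For `g = [[A,B],[C,D]]` in `l×l` blocks, `ĝ = [[A,0,B],[0,1,0],[C,0,D]]`,
obtained by inserting a middle row and column. -/
def hatg {F : Type*} [Field F] (l : ℕ) (g : Matrix (Fin (2*l)) (Fin (2*l)) F) :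
    Matrix (Fin (2*l+1)) (Fin (2*l+1)) F :=
  Matrix.of fun i j =>
    if (i : ℕ) = l ∨ (j : ℕ) = l then (if i = j then 1 else 0)
    else ent g (if (i : ℕ) < l then (i : ℕ) else (i : ℕ) - 1)
      (if (j : ℕ) < l then (j : ℕ) else (j : ℕ) - 1)

/-- `M = diag(I_{l-1}, M̃, I_{l-1})` with `M̃ = [[0,1,0],[1/2,0,1/(2γ)],[1/2,0,−1/(2γ)]]`
and `γ = ρ/2`. -/
def Mmat (F : Type*) [Field F] (l : ℕ) (ρ : F) : Matrix (Fin (2*l+1)) (Fin (2*l+1)) F :=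
  Matrix.of fun i j =>
    if (i : ℕ) = l - 1 then (if (j : ℕ) = l then 1 else 0)
    else if (i : ℕ) = l then
      (if (j : ℕ) = l - 1 then 1/2 else if (j : ℕ) = l + 1 then 1 / (2 * (ρ/2)) else 0)
    else if (i : ℕ) = l + 1 then
      (if (j : ℕ) = l - 1 then 1/2 else if (j : ℕ) = l + 1 then -(1 / (2 * (ρ/2))) else 0)
    else if i = j then 1 else 0

/-- The embedding `j : SO_{2l}(J_{2l,ρ}) → SO_{2l+1}(F)`, `j(g) = M⁻¹·ĝ·M`. -/
def jmap {F : Type*} [Field F] (l : ℕ) (ρ : F) (g : Matrix (Fin (2*l)) (Fin (2*l)) F) :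
    Matrix (Fin (2*l+1)) (Fin (2*l+1)) F :=
  (Mmat F l ρ)⁻¹ * hatg l g * Mmat F l ρ

/-- `A* = J_n·ᵀA⁻¹·J_n`. -/
def astar {F : Type*} [Field F] {n : ℕ} (A : Matrix (Fin n) (Fin n) F) :
    Matrix (Fin n) (Fin n) F :=
  Jmat F n * (A⁻¹)ᵀ * Jmat F n

/-- The block index (0, 1 or 2) of an index of `Fin (2l+1)` for block sizes `(l, 1, l)`. -/
def blockOf3 (l i : ℕ) : ℕ := if i < l then 0 else if i = l then 1 else 2

/-- `V_l`: elements `v ∈ SO_{2l+1}(F)` with `v − I_{2l+1}` strictly block upper triangular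
with respect to the block sizes `(l, 1, l)` (the unipotent radical of the Siegel
parabolic `Q_l`). -/
def VlMem {F : Type*} [Field F] (l : ℕ) (v : Matrix (Fin (2*l+1)) (Fin (2*l+1)) F) : Prop :=
  SO2l1 l v ∧ ∀ i j : Fin (2*l+1), ¬ blockOf3 l (i : ℕ) < blockOf3 l (j : ℕ) →
    v i j = (if i = j then 1 else 0)

/-- `l_l(A) = diag(A, 1, A*) ∈ GL_{2l+1}(F)`. -/
def llMat {F : Type*} [Field F] (l : ℕ) (A : Matrix (Fin l) (Fin l) F) :
    Matrix (Fin (2*l+1)) (Fin (2*l+1)) F :=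
  Matrix.of fun i j =>
    if (i : ℕ) < l then (if (j : ℕ) < l then ent A (i : ℕ) (j : ℕ) else 0)
    else if (i : ℕ) = l then (if i = j then 1 else 0)
    else (if l + 1 ≤ (j : ℕ) then ent (astar A) ((i : ℕ) - (l+1)) ((j : ℕ) - (l+1)) else 0)

/-- `w_l = [[0,0,I_l],[0,(−1)^l,0],[I_l,0,0]] ∈ SO_{2l+1}(F)`. -/
def wlMat (F : Type*) [Field F] (l : ℕ) : Matrix (Fin (2*l+1)) (Fin (2*l+1)) F :=
  Matrix.of fun i j =>
    if (i : ℕ) < l then (if (j : ℕ) = (i : ℕ) + l + 1 then 1 else 0)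
    else if (i : ℕ) = l then (if i = j then (-1)^l else 0)
    else (if (j : ℕ) + l + 1 = (i : ℕ) then 1 else 0)

/-- `V̄_l`: elements `v ∈ SO_{2l+1}` with `v − I_{2l+1}` strictly block lower triangular for
block sizes `(l, 1, l)`. -/
def VlBarMem {F : Type*} [Field F] (l : ℕ)
    (v : Matrix (Fin (2*l+1)) (Fin (2*l+1)) F) : Prop :=
  SO2l1 l v ∧ ∀ i j : Fin (2*l+1), ¬ blockOf3 l (j : ℕ) < blockOf3 l (i : ℕ) →
    v i j = (if i = j then 1 else 0)

/-- The Siegel parabolic `Q_l = {l_l(A)·v : A ∈ GL_l, v ∈ V_l}`. -/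
def QlMem {F : Type*} [Field F] (l : ℕ)
    (g : Matrix (Fin (2*l+1)) (Fin (2*l+1)) F) : Prop :=
  ∃ (A : Matrix (Fin l) (Fin l) F) (v : Matrix (Fin (2*l+1)) (Fin (2*l+1)) F),
    A.det ≠ 0 ∧ VlMem l v ∧ g = llMat l A * v

/-- The opposite Siegel parabolic `Q̄_l = {v̄·l_l(A) : A ∈ GL_l, v̄ ∈ V̄_l}`. -/
def QlBarMem {F : Type*} [Field F] (l : ℕ)
    (g : Matrix (Fin (2*l+1)) (Fin (2*l+1)) F) : Prop :=
  ∃ (A : Matrix (Fin l) (Fin l) F) (v : Matrix (Fin (2*l+1)) (Fin (2*l+1)) F),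
    A.det ≠ 0 ∧ VlBarMem l v ∧ g = v * llMat l A

/-- `K_m^{SO_{2l+1}} = (I_{2l+1} + p^m·M_{2l+1}(ℤ_p)) ∩ SO_{2l+1}(ℚ_p)`. -/
def KmOdd (p l m : ℕ) [Fact p.Prime]
    (g : Matrix (Fin (2*l+1)) (Fin (2*l+1)) ℚ_[p]) : Prop :=
  SO2l1 l g ∧
    ∀ i j : Fin (2*l+1), ‖g i j - (if i = j then 1 else 0)‖ ≤ (p : ℝ) ^ (-(m : ℤ))

/-- `K_m' = {k ∈ K_m : j(k) ∈ (Q_l ∩ K_m^{SO_{2l+1}}) ∪ (Q̄_l ∩ K_m^{SO_{2l+1}})}`. -/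
def KmPrime (p l m : ℕ) [Fact p.Prime] (ρ : ℚ_[p])
    (k : Matrix (Fin (2*l)) (Fin (2*l)) ℚ_[p]) : Prop :=
  Km p l m ρ k ∧
    ((QlMem l (jmap l ρ k) ∧ KmOdd p l m (jmap l ρ k)) ∨
     (QlBarMem l (jmap l ρ k) ∧ KmOdd p l m (jmap l ρ k)))

/-- `diag(a, 1, 1, J_{l-1}·ᵀa⁻¹·J_{l-1}) ∈ GL_{2l}`. -/
def dmat {p : ℕ} [Fact p.Prime] (l : ℕ) (a : Matrix (Fin (l-1)) (Fin (l-1)) ℚ_[p]) :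
    Matrix (Fin (2*l)) (Fin (2*l)) ℚ_[p] :=
  Matrix.of fun i j =>
    if (i : ℕ) < l - 1 ∧ (j : ℕ) < l - 1 then ent a (i : ℕ) (j : ℕ)
    else if l + 1 ≤ (i : ℕ) ∧ l + 1 ≤ (j : ℕ) then
      ent (astar a) ((i : ℕ) - (l+1)) ((j : ℕ) - (l+1))
    else if i = j then 1 else 0

/-- `diag(a, 1) ∈ GL_l`. -/
def augMat {p : ℕ} [Fact p.Prime] (l : ℕ) (a : Matrix (Fin (l-1)) (Fin (l-1)) ℚ_[p]) :
    Matrix (Fin l) (Fin l) ℚ_[p] :=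
  Matrix.of fun i j =>
    if (i : ℕ) < l - 1 ∧ (j : ℕ) < l - 1 then ent a (i : ℕ) (j : ℕ)
    else if i = j then 1 else 0

/-! ### The antidiagonal form and the Levi embedding -/

section Form
variable {F : Type*} [Field F]

theorem jmat_apply {n : ℕ} (i j : Fin n) : Jmat F n i j = if i.rev = j then 1 else 0 := by
  simp only [Jmat, Matrix.of_apply, Fin.ext_iff, Fin.val_rev]
  congr 1
  exact propext ⟨fun h => by omega, fun h => by omega⟩

theorem jmat_mul {n : ℕ} {κ : Type*} (X : Matrix (Fin n) κ F) (i : Fin n) (j : κ) :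
    (Jmat F n * X) i j = X i.rev j := by
  simp [Matrix.mul_apply, jmat_apply]

theorem mul_jmat {n : ℕ} {κ : Type*} (X : Matrix κ (Fin n) F) (i : κ) (j : Fin n) :
    (X * Jmat F n) i j = X i j.rev := by
  simp [Matrix.mul_apply, jmat_apply, Fin.rev_eq_iff]

theorem jmat_mul_self (n : ℕ) : Jmat F n * Jmat F n = 1 := by
  ext i j
  rw [jmat_mul, jmat_apply, Fin.rev_rev, Matrix.one_apply]

theorem jmat_transpose (n : ℕ) : (Jmat F n)ᵀ = Jmat F n := by
  ext i j
  simp only [Matrix.transpose_apply, jmat_apply]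
  congr 1
  exact propext ⟨fun h => by rw [← h, Fin.rev_rev], fun h => by rw [← h, Fin.rev_rev]⟩

theorem astar_apply {n : ℕ} (A : Matrix (Fin n) (Fin n) F) (i j : Fin n) :
    astar A i j = A⁻¹ j.rev i.rev := by
  rw [astar, mul_jmat, jmat_mul, Matrix.transpose_apply]

theorem ent_val {N : ℕ} (g : Matrix (Fin N) (Fin N) F) (i j : Fin N) :
    ent g (i : ℕ) (j : ℕ) = g i j := by
  simp [ent]

theorem ent_lt {N : ℕ} (g : Matrix (Fin N) (Fin N) F) {i j : ℕ} (hi : i < N) (hj : j < N) :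
    ent g i j = g ⟨i, hi⟩ ⟨j, hj⟩ := by
  simp [ent, hi, hj]

/-- The `i`-th index of the first block of size `l`. -/
def lo {l : ℕ} (i : Fin l) : Fin (2*l+1) := ⟨i, by omega⟩
/-- The middle index. -/
def mid (l : ℕ) : Fin (2*l+1) := ⟨l, by omega⟩
/-- The `i`-th index of the last block of size `l`. -/
def hi {l : ℕ} (i : Fin l) : Fin (2*l+1) := ⟨l + 1 + i, by omega⟩

theorem block_cases {l : ℕ} (i : Fin (2*l+1)) :
    (∃ a : Fin l, i = lo a) ∨ i = mid l ∨ ∃ a : Fin l, i = hi a := by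
  rcases lt_trichotomy (i : ℕ) l with h | h | h
  · exact Or.inl ⟨⟨i, h⟩, rfl⟩
  · exact Or.inr (Or.inl (Fin.ext h))
  · refine Or.inr (Or.inr ⟨⟨i - (l+1), by omega⟩, Fin.ext ?_⟩)
    simp only [hi]
    omega

theorem sum_blocks {l : ℕ} {E : Type*} [AddCommMonoid E] (f : Fin (2*l+1) → E) :
    ∑ k, f k = ∑ a : Fin l, f (lo a) + f (mid l) + ∑ a : Fin l, f (hi a) := by
  have h : l + 1 + l = 2*l+1 := by omega
  rw [← (finCongr h).sum_comp, Fin.sum_univ_add, Fin.sum_univ_castSucc]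
  rfl

theorem rev_lo {l : ℕ} (i : Fin l) : (lo i).rev = hi i.rev := by
  ext; simp only [lo, hi, Fin.val_rev]; omega
theorem rev_hi {l : ℕ} (i : Fin l) : (hi i).rev = lo i.rev := by
  ext; simp only [lo, hi, Fin.val_rev]; omega
theorem rev_mid (l : ℕ) : (mid l).rev = mid l := by
  ext; simp only [mid, Fin.val_rev]; omega

theorem lo_inj {l : ℕ} {i j : Fin l} : lo i = lo j ↔ i = j := by
  simp [lo, Fin.ext_iff]
theorem hi_inj {l : ℕ} {i j : Fin l} : hi i = hi j ↔ i = j := by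
  simp [hi, Fin.ext_iff]
theorem lo_ne_mid {l : ℕ} (i : Fin l) : lo i ≠ mid l := by
  simp only [lo, mid, ne_eq, Fin.ext_iff]; omega
theorem lo_ne_hi {l : ℕ} (i j : Fin l) : lo i ≠ hi j := by
  simp only [lo, hi, ne_eq, Fin.ext_iff]; omega
theorem hi_ne_mid {l : ℕ} (i : Fin l) : hi i ≠ mid l := by
  simp only [hi, mid, ne_eq, Fin.ext_iff]; omega

section ll
variable {l : ℕ} (A : Matrix (Fin l) (Fin l) F) (i j : Fin l)

theorem ll_lo_lo : llMat l A (lo i) (lo j) = A i j := by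
  simp [llMat, lo, ent]
theorem ll_lo_mid : llMat l A (lo i) (mid l) = 0 := by
  simp [llMat, lo, mid]
theorem ll_lo_hi : llMat l A (lo i) (hi j) = 0 := by
  simp only [llMat, lo, hi, Matrix.of_apply]
  rw [if_pos i.2, if_neg (by omega)]
theorem ll_mid_lo : llMat l A (mid l) (lo j) = 0 := by
  simp only [llMat, mid, lo, Matrix.of_apply, Fin.ext_iff]
  rw [if_neg (by omega), if_pos trivial, if_neg (by omega)]
theorem ll_mid_mid : llMat l A (mid l) (mid l) = 1 := by
  simp [llMat, mid]
theorem ll_mid_hi : llMat l A (mid l) (hi j) = 0 := by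
  simp only [llMat, mid, hi, Matrix.of_apply, Fin.ext_iff]
  rw [if_neg (by omega), if_pos trivial, if_neg (by omega)]
theorem ll_hi_lo : llMat l A (hi i) (lo j) = 0 := by
  simp only [llMat, lo, hi, Matrix.of_apply]
  rw [if_neg (by omega), if_neg (by omega), if_neg (by omega)]
theorem ll_hi_mid : llMat l A (hi i) (mid l) = 0 := by
  simp only [llMat, mid, hi, Matrix.of_apply]
  rw [if_neg (by omega), if_neg (by omega), if_neg (by omega)]
theorem ll_hi_hi : llMat l A (hi i) (hi j) = A⁻¹ j.rev i.rev := by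
  rw [← astar_apply]
  simp only [llMat, hi, Matrix.of_apply]
  rw [if_neg (by omega), if_neg (by omega), if_pos (by omega)]
  simp [ent]
end ll

theorem ll_mul {l : ℕ} {A B : Matrix (Fin l) (Fin l) F} :
    llMat l A * llMat l B = llMat l (A * B) := by
  ext i j
  rw [Matrix.mul_apply, sum_blocks]
  obtain ⟨a, rfl⟩ | rfl | ⟨a, rfl⟩ := block_cases i <;>
  obtain ⟨b, rfl⟩ | rfl | ⟨b, rfl⟩ := block_cases j <;>
  simp only [ll_lo_lo, ll_lo_mid, ll_lo_hi, ll_mid_lo, ll_mid_mid, ll_mid_hi, ll_hi_lo, ll_hi_mid,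
    ll_hi_hi, mul_zero, zero_mul, Finset.sum_const_zero, add_zero, zero_add, mul_one]
  · rw [Matrix.mul_apply]
  · rw [Matrix.mul_inv_rev, Matrix.mul_apply, ← Equiv.sum_comp Fin.revPerm]
    exact Finset.sum_congr rfl fun k _ => by rw [Fin.revPerm_apply, Fin.rev_rev, mul_comm]

theorem ll_one {l : ℕ} : llMat l (1 : Matrix (Fin l) (Fin l) F) = 1 := by
  ext i j
  obtain ⟨a, rfl⟩ | rfl | ⟨a, rfl⟩ := block_cases i <;>
  obtain ⟨b, rfl⟩ | rfl | ⟨b, rfl⟩ := block_cases j <;>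
  simp [ll_lo_lo, ll_lo_mid, ll_lo_hi, ll_mid_lo, ll_mid_mid, ll_mid_hi, ll_hi_lo, ll_hi_mid,
    ll_hi_hi, Matrix.one_apply, lo_inj, hi_inj, lo_ne_mid, hi_ne_mid,
    (lo_ne_mid _).symm, (hi_ne_mid _).symm, (lo_ne_hi _ _).symm, eq_comm]

theorem ll_isom {l : ℕ} {A : Matrix (Fin l) (Fin l) F} (hA : IsUnit A.det) :
    (llMat l A)ᵀ * Jmat F (2*l+1) * llMat l A = Jmat F (2*l+1) := by
  have key : ∀ a b : Fin l, ∑ k, A k a * A⁻¹ b k = if a = b then 1 else 0 := fun a b => by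
    have := congrFun (congrFun (Matrix.nonsing_inv_mul A hA) b) a
    rw [Matrix.mul_apply, Matrix.one_apply] at this
    simp only [eq_comm (a := a), ← this, mul_comm]
  ext i j
  rw [Matrix.mul_assoc, Matrix.mul_apply, sum_blocks]
  simp only [jmat_mul, Matrix.transpose_apply, rev_lo, rev_hi, rev_mid, jmat_apply]
  obtain ⟨a, rfl⟩ | rfl | ⟨a, rfl⟩ := block_cases i <;>
  obtain ⟨b, rfl⟩ | rfl | ⟨b, rfl⟩ := block_cases j <;>
  simp only [ll_lo_lo, ll_lo_mid, ll_lo_hi, ll_mid_lo, ll_mid_mid, ll_mid_hi, ll_hi_lo, ll_hi_mid,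
    ll_hi_hi, mul_zero, zero_mul, Finset.sum_const_zero, add_zero, zero_add, mul_one, Fin.rev_rev,
    rev_lo, rev_hi, rev_mid, lo_inj, hi_inj, lo_ne_mid, lo_ne_hi, hi_ne_mid,
    (lo_ne_mid _).symm, (hi_ne_mid _).symm, (lo_ne_hi _ _).symm, if_true, if_false]
  · rw [key]; simp [Fin.rev_eq_iff]
  · rw [← Equiv.sum_comp Fin.revPerm]
    simp only [Fin.revPerm_apply, Fin.rev_rev]
    simp only [mul_comm (A⁻¹ _ _), key]
    simp [eq_comm]

/-! ### The change of basis `Mmat` -/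

/-- The index just before the middle one. -/
def q1 (l : ℕ) (_ : 2 ≤ l) : Fin (2*l+1) := ⟨l - 1, by omega⟩
/-- The index just after the middle one. -/
def q3 (l : ℕ) (_ : 2 ≤ l) : Fin (2*l+1) := ⟨l + 1, by omega⟩

section Mat
variable {l : ℕ} (hl : 2 ≤ l) {ρ : F}

theorem q1_ne_mid : q1 l hl ≠ mid l := by
  simp only [q1, mid, ne_eq, Fin.ext_iff]; omega
theorem q3_ne_mid : q3 l hl ≠ mid l := by
  simp only [q3, mid, ne_eq, Fin.ext_iff]; omega
theorem q1_ne_q3 : q1 l hl ≠ q3 l hl := by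
  simp only [q1, q3, ne_eq, Fin.ext_iff]; omega
theorem rev_q1 : (q1 l hl).rev = q3 l hl := by
  ext; simp only [q1, q3, Fin.val_rev]; omega
theorem rev_q3 : (q3 l hl).rev = q1 l hl := by
  ext; simp only [q1, q3, Fin.val_rev]; omega

theorem mmat_apply (h2 : (2 : F) ≠ 0) (i j : Fin (2*l+1)) : Mmat F l ρ i j =
    if i = q1 l hl then (if j = mid l then 1 else 0)
    else if i = mid l then
      (if j = q1 l hl then 1/2 else if j = q3 l hl then 1/ρ else 0)
    else if i = q3 l hl then
      (if j = q1 l hl then 1/2 else if j = q3 l hl then -(1/ρ) else 0)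
    else if i = j then 1 else 0 := by
  simp only [Mmat, Matrix.of_apply, q1, mid, q3, Fin.ext_iff]
  rw [mul_div_cancel₀ _ h2]

theorem mmat_mulVec (h2 : (2 : F) ≠ 0) (x : Fin (2*l+1) → F) (i : Fin (2*l+1)) :
    ∑ k, Mmat F l ρ i k * x k =
    if i = q1 l hl then x (mid l)
    else if i = mid l then x (q1 l hl) / 2 + x (q3 l hl) / ρ
    else if i = q3 l hl then x (q1 l hl) / 2 - x (q3 l hl) / ρ
    else x i := by
  have e : ∀ (a b : F) (k : Fin (2*l+1)),
      (if k = q1 l hl then a else if k = q3 l hl then b else 0) =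
        (if k = q1 l hl then a else 0) + (if k = q3 l hl then b else 0) := fun a b k => by
    by_cases h : k = q1 l hl
    · simp [h, q1_ne_q3]
    · simp [h]
  simp only [mmat_apply hl h2]
  split_ifs with h h h
  · simp
  · simp only [e, add_mul, Finset.sum_add_distrib]
    simp
    ring
  · simp only [e, add_mul, Finset.sum_add_distrib]
    simp
    ring
  · simp

theorem mmat_vecMul (h2 : (2 : F) ≠ 0) (x : Fin (2*l+1) → F) (j : Fin (2*l+1)) :
    ∑ k, x k * Mmat F l ρ k j =
    if j = q1 l hl then (x (mid l) + x (q3 l hl)) / 2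
    else if j = mid l then x (q1 l hl)
    else if j = q3 l hl then (x (mid l) - x (q3 l hl)) / ρ
    else x j := by
  have h12 := q1_ne_mid hl
  have h13 := q1_ne_q3 hl
  have h32 := q3_ne_mid hl
  have e : ∀ k, Mmat F l ρ k j =
      (if k = q1 l hl then (if j = mid l then 1 else 0) else 0) +
      (if k = mid l then
        (if j = q1 l hl then 1/2 else if j = q3 l hl then 1/ρ else 0) else 0) +
      (if k = q3 l hl then
        (if j = q1 l hl then 1/2 else if j = q3 l hl then -(1/ρ) else 0) else 0) +
      (if k = j then (if j = q1 l hl ∨ j = mid l ∨ j = q3 l hl then 0 else 1) else 0) := by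
    intro k
    rw [mmat_apply hl h2]
    by_cases hk1 : k = q1 l hl
    · subst hk1
      by_cases hj : q1 l hl = j
      · subst hj; simp [*]
      · simp [*]
    by_cases hk2 : k = mid l
    · subst hk2
      by_cases hj : mid l = j
      · subst hj; simp [*, h12.symm, h32.symm]
      · simp [*, h32.symm]
    by_cases hk3 : k = q3 l hl
    · subst hk3
      by_cases hj : q3 l hl = j
      · subst hj; simp [*, h13.symm]
      · simp [*]
    by_cases hj : k = j
    · subst hj; simp [*]
    · simp [*]
  simp only [e, mul_add, Finset.sum_add_distrib, mul_ite, mul_zero, Finset.sum_ite_eq',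
    Finset.mem_univ, if_true]
  by_cases hj1 : j = q1 l hl
  · subst hj1; simp [*]; ring
  by_cases hj2 : j = mid l
  · subst hj2; simp [*, h12.symm, h32.symm]
  by_cases hj3 : j = q3 l hl
  · subst hj3; simp [*, h13.symm]; ring
  simp [*]

/-- The form on the `(2l+1)`-dimensional space that extends `Jrho` by the value `ρ` on
the middle vector. -/
def jhat (l : ℕ) (ρ : F) : Matrix (Fin (2*l+1)) (Fin (2*l+1)) F :=
  Matrix.of fun i j => if i = j ∧ (i : ℕ) = l - 1 then 1 else if i = j ∧ (i : ℕ) = l then ρ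
    else if i = j ∧ (i : ℕ) = l + 1 then -ρ
    else if i.rev = j ∧ ((i : ℕ) < l - 1 ∨ l + 1 < (i : ℕ)) then 1 else 0

theorem jhat_mulVec (x : Fin (2*l+1) → F) (i : Fin (2*l+1)) :
    ∑ k, jhat l ρ i k * x k =
    if i = q1 l hl then x (q1 l hl)
    else if i = mid l then ρ * x (mid l)
    else if i = q3 l hl then - (ρ * x (q3 l hl))
    else x i.rev := by
  have h12 := q1_ne_mid hl
  have h13 := q1_ne_q3 hl
  have h32 := q3_ne_mid hl
  have hq1 : ∀ i : Fin (2*l+1), ((i : ℕ) = l - 1) = (i = q1 l hl) := fun i => by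
    simp [Fin.ext_iff, q1]
  have hq2 : ∀ i : Fin (2*l+1), ((i : ℕ) = l) = (i = mid l) := fun i => by
    simp [Fin.ext_iff, mid]
  have hq3 : ∀ i : Fin (2*l+1), ((i : ℕ) = l + 1) = (i = q3 l hl) := fun i => by
    simp [Fin.ext_iff, q3]
  have hh : ∀ i : Fin (2*l+1), ((i : ℕ) < l - 1 ∨ l + 1 < (i : ℕ)) =
      ¬ (i = q1 l hl ∨ i = mid l ∨ i = q3 l hl) := fun i => by
    simp only [Fin.ext_iff, q1, q3, mid, eq_iff_iff]; omega
  simp only [jhat, Matrix.of_apply, hq1, hq2, hq3, hh]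
  split_ifs with h1 h2 h3
  · simp [h1, h12, h13]
  · simp [h2, h12.symm, h32.symm]
  · simp [h3, h13.symm, h32]
  · simp [h1, h2, h3]

theorem mmat_isom (hl : 2 ≤ l) (h2 : (2 : F) ≠ 0) (hρ : ρ ≠ 0) :
    (Mmat F l ρ)ᵀ * (jhat l ρ * Mmat F l ρ) = Jmat F (2*l+1) := by
  have h12 := q1_ne_mid hl
  have h13 := q1_ne_q3 hl
  have h32 := q3_ne_mid hl
  have hr1 := rev_q1 hl
  have hr3 := rev_q3 hl
  have hr2 := rev_mid l
  ext i j
  have e : ∀ k, (jhat l ρ * Mmat F l ρ) k j = _ := fun k => jhat_mulVec hl _ k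
  rw [Matrix.mul_apply]
  simp only [Matrix.transpose_apply, mul_comm (Mmat F l ρ _ _)]
  rw [mmat_vecMul hl h2]
  simp only [e, if_true, h12, h13, h32, h12.symm, h13.symm, h32.symm, if_false,
    mmat_apply hl h2]
  rw [jmat_apply]
  by_cases h1 : i = q1 l hl
  · subst h1
    simp only [if_true, hr1]
    by_cases hj1 : j = q1 l hl
    · subst hj1; simp [h13.symm]
    by_cases hj3 : j = q3 l hl
    · subst hj3; simp [h13.symm]; field_simp; norm_num
    simp [hj1, hj3, Ne.symm hj3]
  by_cases hi2 : i = mid l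
  · subst hi2
    simp [h12.symm, hr2, eq_comm]
  by_cases h3 : i = q3 l hl
  · subst h3
    simp only [if_true, hr3, h13.symm, h32, if_false]
    by_cases hj1 : j = q1 l hl
    · subst hj1; simp; field_simp; norm_num
    by_cases hj3 : j = q3 l hl
    · subst hj3; simp [h13, h13.symm]
    simp [hj1, hj3, Ne.symm hj1]
  have k1 : i.rev ≠ q1 l hl := fun h => h3 (by rw [← Fin.rev_rev i, h, hr1])
  have k3 : i.rev ≠ q3 l hl := fun h => h1 (by rw [← Fin.rev_rev i, h, hr3])
  have k2 : i.rev ≠ mid l := fun h => hi2 (by rw [← Fin.rev_rev i, h, hr2])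
  simp [h1, hi2, h3, k1, k2, k3]

theorem mmat_inv (hl : 2 ≤ l) (h2 : (2 : F) ≠ 0) (hρ : ρ ≠ 0) :
    (Mmat F l ρ)⁻¹ = Jmat F (2*l+1) * ((Mmat F l ρ)ᵀ * jhat l ρ) :=
  Matrix.inv_eq_left_inv (by
    rw [Matrix.mul_assoc, Matrix.mul_assoc, mmat_isom hl h2 hρ, jmat_mul_self])

theorem mmat_inv_mul (hl : 2 ≤ l) (h2 : (2 : F) ≠ 0) (hρ : ρ ≠ 0) :
    (Mmat F l ρ)⁻¹ * Mmat F l ρ = 1 := by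
  rw [mmat_inv hl h2 hρ, Matrix.mul_assoc, Matrix.mul_assoc, mmat_isom hl h2 hρ, jmat_mul_self]

theorem mmat_mul_inv (hl : 2 ≤ l) (h2 : (2 : F) ≠ 0) (hρ : ρ ≠ 0) :
    Mmat F l ρ * (Mmat F l ρ)⁻¹ = 1 :=
  mul_eq_one_comm.1 (mmat_inv_mul hl h2 hρ)

theorem conj_isom (hl : 2 ≤ l) (h2 : (2 : F) ≠ 0) (hρ : ρ ≠ 0)
    {h : Matrix (Fin (2*l+1)) (Fin (2*l+1)) F}
    (hh : hᵀ * Jmat F (2*l+1) * h = Jmat F (2*l+1)) :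
    (Mmat F l ρ * h * (Mmat F l ρ)⁻¹)ᵀ * (jhat l ρ * (Mmat F l ρ * h * (Mmat F l ρ)⁻¹)) =
      jhat l ρ := by
  have e := mmat_isom hl h2 hρ
  have e1 := mmat_mul_inv hl h2 hρ
  set M := Mmat F l ρ
  set P := M⁻¹
  have e2 : Pᵀ * Mᵀ = 1 := by rw [← Matrix.transpose_mul, e1, Matrix.transpose_one]
  calc (M * h * P)ᵀ * (jhat l ρ * (M * h * P))
      = Pᵀ * (hᵀ * (Mᵀ * (jhat l ρ * M)) * h) * P := by
        simp only [Matrix.transpose_mul, Matrix.mul_assoc]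
    _ = (Pᵀ * Mᵀ) * jhat l ρ * (M * P) := by
        rw [e, hh, ← e]; simp only [Matrix.mul_assoc]
    _ = jhat l ρ := by rw [e1, e2, Matrix.one_mul, Matrix.mul_one]

/-! ### The image of `jmap` -/

theorem val_succAbove_mid (i : Fin (2*l)) :
    (((mid l).succAbove i : Fin (2*l+1)) : ℕ) = if (i : ℕ) < l then (i : ℕ) else i + 1 := by
  rw [Fin.succAbove]
  simp only [Fin.lt_def, mid, Fin.val_castSucc]
  split_ifs <;> rfl

theorem hatg_succ (k : Matrix (Fin (2*l)) (Fin (2*l)) F) (i j : Fin (2*l)) :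
    hatg l k ((mid l).succAbove i) ((mid l).succAbove j) = k i j := by
  have h : ∀ i : Fin (2*l), (if (((mid l).succAbove i : Fin (2*l+1)) : ℕ) < l then
      (((mid l).succAbove i : Fin (2*l+1)) : ℕ)
      else (((mid l).succAbove i : Fin (2*l+1)) : ℕ) - 1) = i := fun i => by
    rw [val_succAbove_mid]; split_ifs <;> omega
  have h' : ∀ i : Fin (2*l), (((mid l).succAbove i : Fin (2*l+1)) : ℕ) ≠ l := fun i => by
    rw [val_succAbove_mid]; split_ifs <;> omega
  simp only [hatg, Matrix.of_apply, h, h', or_self, if_false, ent_val]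

theorem hatg_mid_left (k : Matrix (Fin (2*l)) (Fin (2*l)) F) (j : Fin (2*l+1)) :
    hatg l k (mid l) j = if mid l = j then 1 else 0 := by
  simp only [hatg, Matrix.of_apply, mid, true_or, if_true]
  congr

theorem hatg_mid_right (k : Matrix (Fin (2*l)) (Fin (2*l)) F) (i : Fin (2*l+1)) :
    hatg l k i (mid l) = if i = mid l then 1 else 0 := by
  simp only [hatg, Matrix.of_apply, mid, or_true, if_true]
  congr

theorem jhat_succ (hl : 2 ≤ l) (i j : Fin (2*l)) :
    jhat l ρ ((mid l).succAbove i) ((mid l).succAbove j) = Jrho F l ρ i j := by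
  rw [Jrho, mul_jmat]
  simp only [jhat, Matrix.of_apply, Fin.ext_iff, Fin.val_rev, val_succAbove_mid]
  have hi := i.2
  have hj := j.2
  split_ifs <;> first | rfl | omega

theorem det_hatg (k : Matrix (Fin (2*l)) (Fin (2*l)) F) : (hatg l k).det = k.det := by
  rw [Matrix.det_succ_row _ (mid l), Finset.sum_eq_single (mid l)]
  · have : (hatg l k).submatrix (mid l).succAbove (mid l).succAbove = k := by
      ext i j; exact hatg_succ k i j
    rw [this, hatg_mid_left, if_pos rfl, ← two_mul, pow_mul]
    simp
  · intro j _ hj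
    rw [hatg_mid_left, if_neg (Ne.symm hj)]
    simp
  · simp

theorem so2l_of_hatg (hl : 2 ≤ l) {k : Matrix (Fin (2*l)) (Fin (2*l)) F}
    (hk : (hatg l k)ᵀ * (jhat l ρ * hatg l k) = jhat l ρ) (hd : (hatg l k).det = 1) :
    SO2l l ρ k := by
  refine ⟨by rw [← det_hatg, hd], ?_⟩
  ext i j
  rw [← jhat_succ hl, ← hk, Matrix.mul_assoc, Matrix.mul_apply, Matrix.mul_apply,
    Fin.sum_univ_succAbove _ (mid l)]
  simp only [Matrix.transpose_apply, hatg_succ, hatg_mid_left, (Fin.succAbove_ne _ _).symm,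
    if_false, zero_mul, zero_add]
  refine Finset.sum_congr rfl fun a _ => ?_
  rw [Matrix.mul_apply, Matrix.mul_apply, Fin.sum_univ_succAbove _ (mid l)]
  simp only [hatg_succ, hatg_mid_left, (Fin.succAbove_ne _ _).symm,
    if_false, mul_zero, zero_add, jhat_succ hl]

theorem exists_hatg (hl : 2 ≤ l) (hρ : ρ ≠ 0) {G : Matrix (Fin (2*l+1)) (Fin (2*l+1)) F}
    (hG : Gᵀ * (jhat l ρ * G) = jhat l ρ)
    (hfix : ∀ i, G i (mid l) = if i = mid l then 1 else 0) : ∃ k, hatg l k = G := by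
  refine ⟨G.submatrix (mid l).succAbove (mid l).succAbove, ?_⟩
  have hmid : ∀ k, jhat l ρ k (mid l) = if k = mid l then ρ else 0 := fun k => by
    have := jhat_mulVec hl (ρ := ρ) (fun j => if j = mid l then (1 : F) else 0) k
    simp only [mul_ite, mul_one, mul_zero, Finset.sum_ite_eq', Finset.mem_univ, if_true] at this
    rw [this]
    have h1 := q1_ne_mid hl
    have h3 := q3_ne_mid hl
    have hr : k.rev = mid l ↔ k = mid l := by rw [Fin.rev_eq_iff, rev_mid]
    simp only [h1, h3, if_false, neg_zero, hr]
    by_cases k1 : k = q1 l hl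
    · simp [k1, h1]
    by_cases k2 : k = mid l
    · simp [k2, h1.symm]
    simp [k1, k2]
  have hrow : ∀ j, G (mid l) j = if mid l = j then 1 else 0 := fun j => by
    have h := congrFun (congrFun hG j) (mid l)
    have e : ∀ a, (jhat l ρ * G) a (mid l) = if a = mid l then ρ else 0 := fun a => by
      simp only [Matrix.mul_apply, hfix, mul_ite, mul_one, mul_zero, Finset.sum_ite_eq',
        Finset.mem_univ, if_true, hmid]
    rw [Matrix.mul_apply, hmid] at h
    simp only [e, Matrix.transpose_apply, mul_ite, mul_zero, Finset.sum_ite_eq', Finset.mem_univ,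
      if_true] at h
    have := mul_right_cancel₀ hρ (h.trans (show _ = (if j = mid l then 1 else 0) * ρ by
      split_ifs <;> simp))
    rw [this]; simp only [eq_comm]
  ext i j
  rcases eq_or_ne i (mid l) with rfl | hi
  · rw [hatg_mid_left, hrow]
  rcases eq_or_ne j (mid l) with rfl | hj
  · rw [hatg_mid_right, hfix]
  obtain ⟨a, rfl⟩ := Fin.exists_succAbove_eq hi
  obtain ⟨b, rfl⟩ := Fin.exists_succAbove_eq hj
  rw [hatg_succ]; rfl

/-- The vector `e_l + (ρ/2) e_{l+2}` (one-indexed): the preimage of the middle basis vector under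
`Mmat`, hence fixed by the image of `jmap`. -/
def wvec (l : ℕ) (hl : 2 ≤ l) (ρ : F) : Fin (2*l+1) → F :=
  fun i => if i = q1 l hl then 1 else if i = q3 l hl then ρ / 2 else 0

theorem mmat_wvec (hl : 2 ≤ l) (h2 : (2 : F) ≠ 0) (hρ : ρ ≠ 0) :
    Mmat F l ρ *ᵥ wvec l hl ρ = fun i => if i = mid l then 1 else 0 := by
  funext i
  have h12 := q1_ne_mid hl
  have h13 := q1_ne_q3 hl
  have h32 := q3_ne_mid hl
  rw [Matrix.mulVec, dotProduct, mmat_mulVec hl h2]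
  simp only [wvec, h12.symm, h13.symm, h32.symm, if_true, if_false]
  by_cases h1 : i = q1 l hl
  · simp [h1, h12]
  by_cases h2' : i = mid l
  · simp [h2', h12.symm]; field_simp; norm_num
  by_cases h3 : i = q3 l hl
  · simp [h3, h13.symm, h32]; field_simp; norm_num
  simp [h1, h2', h3]

/-- Every isometry of the antidiagonal form that fixes `wvec` lies in the image of `jmap`: its
conjugate by `Mmat` is a `jhat`-isometry fixing the middle basis vector, hence preserving the
orthogonal complement of that vector. -/
theorem exists_jmap (hl : 2 ≤ l) (h2 : (2 : F) ≠ 0) (hρ : ρ ≠ 0)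
    {h : Matrix (Fin (2*l+1)) (Fin (2*l+1)) F}
    (hh : hᵀ * Jmat F (2*l+1) * h = Jmat F (2*l+1)) (hw : h *ᵥ wvec l hl ρ = wvec l hl ρ) :
    ∃ k, jmap l ρ k = h := by
  have e0 := mmat_inv_mul hl h2 hρ
  have ew : (Mmat F l ρ)⁻¹ *ᵥ (fun i => if i = mid l then (1 : F) else 0) = wvec l hl ρ := by
    rw [← mmat_wvec hl h2 hρ, Matrix.mulVec_mulVec, e0, Matrix.one_mulVec]
  obtain ⟨k, hk⟩ := exists_hatg hl hρ (conj_isom hl h2 hρ hh) (fun i => by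
    have : (Mmat F l ρ * h * (Mmat F l ρ)⁻¹) *ᵥ (fun i => if i = mid l then (1 : F) else 0) =
        fun i => if i = mid l then (1 : F) else 0 := by
      rw [← Matrix.mulVec_mulVec, ew, ← Matrix.mulVec_mulVec, hw, mmat_wvec hl h2 hρ]
    have := congrFun this i
    simpa [Matrix.mulVec, dotProduct] using this)
  refine ⟨k, ?_⟩
  rw [jmap, hk]
  calc _ = ((Mmat F l ρ)⁻¹ * Mmat F l ρ) * h * ((Mmat F l ρ)⁻¹ * Mmat F l ρ) := by
        simp only [Matrix.mul_assoc]
    _ = h := by rw [e0, Matrix.one_mul, Matrix.mul_one]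

theorem hatg_of_jmap (hl : 2 ≤ l) (h2 : (2 : F) ≠ 0) (hρ : ρ ≠ 0)
    (k : Matrix (Fin (2*l)) (Fin (2*l)) F) :
    hatg l k = Mmat F l ρ * jmap l ρ k * (Mmat F l ρ)⁻¹ := by
  have e := mmat_mul_inv hl h2 hρ
  calc hatg l k = (Mmat F l ρ * (Mmat F l ρ)⁻¹) * hatg l k *
        (Mmat F l ρ * (Mmat F l ρ)⁻¹) := by rw [e, Matrix.one_mul, Matrix.mul_one]
    _ = _ := by simp only [jmap, Matrix.mul_assoc]

theorem so2l_of_jmap (hl : 2 ≤ l) (h2 : (2 : F) ≠ 0) (hρ : ρ ≠ 0)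
    {k : Matrix (Fin (2*l)) (Fin (2*l)) F} (hk : SO2l1 l (jmap l ρ k)) : SO2l l ρ k := by
  refine so2l_of_hatg hl ?_ ?_
  · rw [hatg_of_jmap hl h2 hρ]
    exact conj_isom hl h2 hρ hk.2
  · rw [hatg_of_jmap hl h2 hρ, Matrix.det_mul, Matrix.det_mul, hk.1, mul_one, ← Matrix.det_mul,
      mmat_mul_inv hl h2 hρ, Matrix.det_one]

/-! ### Siegel transvections -/

/-- The Siegel transvection `x ↦ x + c (⟨e, x⟩ u - ⟨u, x⟩ e)`, where `e` is the basis vector of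
index `q` and the bilinear form is the antidiagonal one. -/
def transv (q : Fin (2*l+1)) (c : F) (u : Fin (2*l+1) → F) :
    Matrix (Fin (2*l+1)) (Fin (2*l+1)) F :=
  1 + c • Matrix.of fun i j =>
    u i * (if j = q.rev then 1 else 0) - (if i = q then 1 else 0) * u j.rev

theorem transv_isom (q : Fin (2*l+1)) (hq : q ≠ q.rev) (c : F) (u : Fin (2*l+1) → F)
    (hu : ∀ i, u i * u i.rev = 0) (huq : u q.rev = 0) :
    (transv q c u)ᵀ * Jmat F (2*l+1) * transv q c u = Jmat F (2*l+1) := by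
  set N : Matrix (Fin (2*l+1)) (Fin (2*l+1)) F := c • Matrix.of fun i j =>
    u i * (if j = q.rev then 1 else 0) - (if i = q then 1 else 0) * u j.rev with hN
  have hT : transv q c u = 1 + N := rfl
  have h1 : Nᵀ * Jmat F (2*l+1) = -(Jmat F (2*l+1) * N) := by
    ext i j
    rw [mul_jmat, Matrix.neg_apply, jmat_mul]
    simp only [hN, Matrix.transpose_apply, Matrix.smul_apply, Matrix.of_apply, smul_eq_mul,
      Fin.rev_eq_iff]
    ring
  have h2 : N * N = 0 := by
    rw [hN, Matrix.smul_mul, Matrix.mul_smul]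
    suffices h : ∀ i j, (∑ k : Fin (2*l+1),
        (u i * (if k = q.rev then 1 else 0) - (if i = q then 1 else 0) * u k.rev) *
        (u k * (if j = q.rev then 1 else 0) - (if k = q then 1 else 0) * u j.rev)) = 0 by
      ext i j
      simp only [Matrix.smul_apply, Matrix.mul_apply, Matrix.of_apply, h, smul_zero,
        Matrix.zero_apply]
    intro i j
    refine Finset.sum_eq_zero fun k _ => ?_
    have hk := hu k
    by_cases k1 : k = q
    · subst k1; simp only [hq, if_false, if_true, huq]; ring
    by_cases k2 : k = q.rev
    · subst k2; simp only [huq, Ne.symm hq, if_false, if_true]; ring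
    simp only [k1, k2, if_false]
    linear_combination (-(if i = q then 1 else 0) * (if j = q.rev then 1 else 0)) * hk
  rw [hT, Matrix.transpose_add, Matrix.transpose_one, Matrix.add_mul, Matrix.one_mul, h1,
    Matrix.mul_add, Matrix.mul_one, Matrix.add_mul, Matrix.neg_mul, Matrix.mul_assoc, h2]
  simp

theorem transv_mulVec (q : Fin (2*l+1)) (c : F) (u w : Fin (2*l+1) → F)
    (hc : c * w q.rev = 1) (huw : ∀ i, u i.rev * w i = 0) :
    transv q c u *ᵥ w = w + u := by
  funext i
  rw [transv, Matrix.add_mulVec, Matrix.one_mulVec, Matrix.smul_mulVec, Pi.add_apply,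
    Pi.add_apply, Pi.smul_apply]
  simp only [Matrix.mulVec, dotProduct, Matrix.of_apply, sub_mul, mul_assoc, huw,
    mul_zero, sub_zero]
  simp only [mul_ite, ite_mul, one_mul, zero_mul, mul_zero, Finset.sum_ite_eq',
    Finset.mem_univ, if_true, smul_eq_mul]
  linear_combination u i * hc

/-- A matrix that agrees with `1` on the three middle rows and columns commutes with `Mmat`. -/
theorem comm_mmat (hl : 2 ≤ l) (h2 : (2 : F) ≠ 0) {D : Matrix (Fin (2*l+1)) (Fin (2*l+1)) F}
    (hr : ∀ i q, q = q1 l hl ∨ q = mid l ∨ q = q3 l hl → D i q = if i = q then 1 else 0)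
    (hc : ∀ j q, q = q1 l hl ∨ q = mid l ∨ q = q3 l hl → D q j = if q = j then 1 else 0) :
    D * Mmat F l ρ = Mmat F l ρ * D := by
  have h12 := q1_ne_mid hl
  have h13 := q1_ne_q3 hl
  have h32 := q3_ne_mid hl
  ext i j
  rw [Matrix.mul_apply, Matrix.mul_apply, mmat_vecMul hl h2 (D i), mmat_mulVec hl h2 (D · j)]
  have r1 := fun i => hr i _ (Or.inl rfl)
  have r2 := fun i => hr i _ (Or.inr (Or.inl rfl))
  have r3 := fun i => hr i _ (Or.inr (Or.inr rfl))
  have c1 := fun i => hc i _ (Or.inl rfl)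
  have c2 := fun i => hc i _ (Or.inr (Or.inl rfl))
  have c3 := fun i => hc i _ (Or.inr (Or.inr rfl))
  simp only [r1, r2, r3, c1, c2, c3]
  by_cases j1 : j = q1 l hl
  · subst j1
    simp only [r1]
    split_ifs <;> simp_all
  by_cases j2 : j = mid l
  · subst j2
    simp only [r2]
    split_ifs <;> simp_all
  by_cases j3 : j = q3 l hl
  · subst j3
    simp only [r3]
    split_ifs <;> simp_all [neg_div]
  have k1 := Ne.symm j1
  have k2 := Ne.symm j2
  have k3 := Ne.symm j3
  simp only [j1, j2, j3, k1, k2, k3, if_false]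
  split_ifs <;> simp_all

end Mat
end Form

section Padic
variable {p : ℕ} [Fact p.Prime]

/-! ### The Levi elements `diag(a, 1, 1, a*)` -/

theorem aug_mul {l : ℕ} (hl : 2 ≤ l) (a b : Matrix (Fin (l-1)) (Fin (l-1)) ℚ_[p]) :
    augMat l a * augMat l b = augMat l (a * b) := by
  obtain ⟨n, rfl⟩ : ∃ n, l = n + 1 := ⟨l - 1, by omega⟩
  have h1 : ∀ (a : Matrix (Fin n) (Fin n) ℚ_[p]) (i j : Fin n),
      augMat (n+1) a i.castSucc j.castSucc = a i j := fun a i j => by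
    simp [augMat, ent]
  have h2 : ∀ (a : Matrix (Fin n) (Fin n) ℚ_[p]) (i : Fin n),
      augMat (n+1) a i.castSucc (Fin.last n) = 0 := fun a i => by
    simp [augMat, ent]
  have h3 : ∀ (a : Matrix (Fin n) (Fin n) ℚ_[p]) (i : Fin n),
      augMat (n+1) a (Fin.last n) i.castSucc = 0 := fun a i => by
    simp [augMat, ent, Fin.ext_iff]; omega
  have h4 : ∀ (a : Matrix (Fin n) (Fin n) ℚ_[p]),
      augMat (n+1) a (Fin.last n) (Fin.last n) = 1 := fun a => by
    simp [augMat, ent]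
  ext i j
  rw [Matrix.mul_apply, Fin.sum_univ_castSucc]
  refine Fin.lastCases ?_ (fun i => ?_) i <;> refine Fin.lastCases ?_ (fun j => ?_) j
  · simp [h3, h4]
  · simp [h1, h3, h4]
  · simp [h1, h2, h4]
  · simp only [h2, h3, mul_zero, add_zero]
    rw [h1 (a * b), Matrix.mul_apply]
    exact Finset.sum_congr rfl fun k _ => by rw [h1, h1]

theorem aug_one {l : ℕ} : augMat l (1 : Matrix (Fin (l-1)) (Fin (l-1)) ℚ_[p]) = 1 := by
  ext i j
  simp only [augMat, Matrix.of_apply, Matrix.one_apply]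
  split_ifs with h h' h'
  · subst h'
    rw [ent_lt _ h.1 h.2, Matrix.one_apply, if_pos rfl]
  · rw [ent_lt _ h.1 h.2, Matrix.one_apply, if_neg]
    simpa [Fin.ext_iff] using h'
  · rfl
  · rfl

theorem aug_inv {l : ℕ} (hl : 2 ≤ l) {a : Matrix (Fin (l-1)) (Fin (l-1)) ℚ_[p]}
    (ha : IsUnit a.det) : (augMat l a)⁻¹ = augMat l a⁻¹ :=
  Matrix.inv_eq_left_inv (by rw [aug_mul hl, Matrix.nonsing_inv_mul a ha, aug_one])

theorem dmat_ent {l : ℕ} (a : Matrix (Fin (l-1)) (Fin (l-1)) ℚ_[p]) {i j : ℕ}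
    (hi : i < 2*l) (hj : j < 2*l) : ent (dmat l a) i j =
      if i < l - 1 ∧ j < l - 1 then ent a i j
      else if l + 1 ≤ i ∧ l + 1 ≤ j then ent (astar a) (i - (l+1)) (j - (l+1))
      else if i = j then 1 else 0 := by
  rw [ent_lt _ hi hj]
  simp only [dmat, Matrix.of_apply, Fin.mk.injEq]

theorem hatg_ent {F : Type*} [Field F] {l : ℕ} (g : Matrix (Fin (2*l)) (Fin (2*l)) F)
    (i j : Fin (2*l+1)) (x y : ℕ) (hx : x < l ∧ (i : ℕ) = x ∨ l ≤ x ∧ (i : ℕ) = x + 1)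
    (hy : y < l ∧ (j : ℕ) = y ∨ l ≤ y ∧ (j : ℕ) = y + 1) : hatg l g i j = ent g x y := by
  have e1 : (if (i : ℕ) < l then (i : ℕ) else (i : ℕ) - 1) = x := by split_ifs <;> omega
  have e2 : (if (j : ℕ) < l then (j : ℕ) else (j : ℕ) - 1) = y := by split_ifs <;> omega
  simp only [hatg, Matrix.of_apply]
  rw [e1, e2, if_neg (by omega)]

theorem hatg_dmat {l : ℕ} (hl : 2 ≤ l) {a : Matrix (Fin (l-1)) (Fin (l-1)) ℚ_[p]}
    (ha : IsUnit a.det) : hatg l (dmat l a) = llMat l (augMat l a) := by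
  have hlo : ∀ x : Fin l, (x : ℕ) < l ∧ (lo x : ℕ) = (x : ℕ) ∨
      l ≤ (x : ℕ) ∧ (lo x : ℕ) = x + 1 := fun x => Or.inl ⟨x.2, rfl⟩
  have hhi : ∀ x : Fin l, l + (x : ℕ) < l ∧ (hi x : ℕ) = l + (x : ℕ) ∨
      l ≤ l + (x : ℕ) ∧ (hi x : ℕ) = l + x + 1 := fun x =>
    Or.inr ⟨by omega, by simp only [hi]; omega⟩
  ext i j
  obtain ⟨x, rfl⟩ | rfl | ⟨x, rfl⟩ := block_cases i
  · obtain ⟨y, rfl⟩ | rfl | ⟨y, rfl⟩ := block_cases j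
    · rw [ll_lo_lo, hatg_ent _ _ _ _ _ (hlo x) (hlo y), dmat_ent a (by omega) (by omega),
        if_neg (c := l + 1 ≤ (x : ℕ) ∧ _) (by omega)]
      simp only [augMat, Matrix.of_apply, Fin.ext_iff]
    · rw [ll_lo_mid, hatg_mid_right, if_neg (lo_ne_mid _)]
    · rw [ll_lo_hi, hatg_ent _ _ _ _ _ (hlo x) (hhi y), dmat_ent a (by omega) (by omega),
        if_neg (by omega), if_neg (by omega), if_neg (by omega)]
  · rw [hatg_mid_left]
    obtain ⟨y, rfl⟩ | rfl | ⟨y, rfl⟩ := block_cases j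
    · rw [ll_mid_lo, if_neg (lo_ne_mid _).symm]
    · rw [ll_mid_mid, if_pos rfl]
    · rw [ll_mid_hi, if_neg (hi_ne_mid _).symm]
  · obtain ⟨y, rfl⟩ | rfl | ⟨y, rfl⟩ := block_cases j
    · rw [ll_hi_lo, hatg_ent _ _ _ _ _ (hhi x) (hlo y), dmat_ent a (by omega) (by omega),
        if_neg (by omega), if_neg (by omega), if_neg (by omega)]
    · rw [ll_hi_mid, hatg_mid_right, if_neg (hi_ne_mid _)]
    · rw [ll_hi_hi, hatg_ent _ _ _ _ _ (hhi x) (hhi y), aug_inv hl ha,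
        dmat_ent a (by omega) (by omega), if_neg (by omega)]
      simp only [augMat, Matrix.of_apply, Fin.ext_iff, Fin.val_rev]
      by_cases h : 1 ≤ (x : ℕ) ∧ 1 ≤ (y : ℕ)
      · rw [if_pos (by omega), if_pos (by omega), ent_lt _ (by omega) (by omega),
          ent_lt _ (by omega) (by omega), astar_apply]
        refine congrArg₂ (fun i j => a⁻¹ i j) (Fin.ext ?_) (Fin.ext ?_) <;>
          simp only [Fin.val_rev] <;> omega
      · rw [if_neg (c := l + 1 ≤ l + (x : ℕ) ∧ _) (by omega),
          if_neg (c := l - ((y : ℕ) + 1) < l - 1 ∧ _) (by omega)]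
        by_cases hxy : (x : ℕ) = y
        · rw [if_pos (by omega), if_pos (by omega)]
        · rw [if_neg (by omega), if_neg (by omega)]

/-- On the Levi element `diag(a, 1, 1, a*)` conjugation by `Mmat` is trivial. -/
theorem jmap_dmat {l : ℕ} (hl : 2 ≤ l) (h2 : (2 : ℚ_[p]) ≠ 0) {ρ : ℚ_[p]} (hρ : ρ ≠ 0)
    {a : Matrix (Fin (l-1)) (Fin (l-1)) ℚ_[p]}
    (ha : IsUnit a.det) : jmap l ρ (dmat l a) = llMat l (augMat l a) := by
  have hq1 : q1 l hl = lo ⟨l - 1, by omega⟩ := rfl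
  have hq3 : q3 l hl = hi ⟨0, by omega⟩ := rfl
  rw [jmap, hatg_dmat hl ha, Matrix.mul_assoc, comm_mmat hl h2, ← Matrix.mul_assoc,
    mmat_inv_mul hl h2 hρ, Matrix.one_mul]
  · rintro i q (rfl | rfl | rfl)
    · rw [hq1]
      obtain ⟨x, rfl⟩ | rfl | ⟨x, rfl⟩ := block_cases i
      · simp only [ll_lo_lo, lo_inj, augMat, Matrix.of_apply]
        rw [if_neg (by omega)]
      · rw [ll_mid_lo, if_neg (lo_ne_mid _).symm]
      · rw [ll_hi_lo, if_neg (lo_ne_hi _ _).symm]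
    · rw [← hatg_dmat hl ha, hatg_mid_right]
    · rw [hq3]
      obtain ⟨x, rfl⟩ | rfl | ⟨x, rfl⟩ := block_cases i
      · rw [ll_lo_hi, if_neg (lo_ne_hi _ _)]
      · rw [ll_mid_hi, if_neg (hi_ne_mid _).symm]
      · rw [ll_hi_hi, aug_inv hl ha]
        simp only [hi_inj, augMat, Matrix.of_apply, Fin.rev_inj]
        rw [if_neg (by simp only [Fin.val_rev]; omega)]
        simp only [eq_comm]
  · rintro j q (rfl | rfl | rfl)
    · rw [hq1]
      obtain ⟨x, rfl⟩ | rfl | ⟨x, rfl⟩ := block_cases j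
      · simp only [ll_lo_lo, lo_inj, augMat, Matrix.of_apply]
        rw [if_neg (by omega)]
      · rw [ll_lo_mid, if_neg (lo_ne_mid _)]
      · rw [ll_lo_hi, if_neg (lo_ne_hi _ _)]
    · rw [← hatg_dmat hl ha, hatg_mid_left]
    · rw [hq3]
      obtain ⟨x, rfl⟩ | rfl | ⟨x, rfl⟩ := block_cases j
      · rw [ll_hi_lo, if_neg (lo_ne_hi _ _).symm]
      · rw [ll_hi_mid, if_neg (hi_ne_mid _)]
      · rw [ll_hi_hi, aug_inv hl ha]
        simp only [hi_inj, augMat, Matrix.of_apply, Fin.rev_inj]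
        rw [if_neg (by simp only [Fin.val_rev]; omega)]
        simp only [eq_comm]


/-! ### Matrices congruent to the identity -/

/-- `Close ε X` says that `X` is congruent to the identity: every entry of `X - 1` has norm at most
`ε`. -/
def Close {n : Type*} [DecidableEq n] (ε : ℝ) (X : Matrix n n ℚ_[p]) : Prop :=
  ∀ i j, ‖X i j - (if i = j then 1 else 0)‖ ≤ ε

theorem close_iff {n : Type*} [DecidableEq n] {ε : ℝ} {X : Matrix n n ℚ_[p]} :
    Close ε X ↔ ∀ i j, ‖(X - 1) i j‖ ≤ ε := Iff.rfl

theorem Close.norm_le_one {n : Type*} [DecidableEq n] {ε : ℝ} {X : Matrix n n ℚ_[p]}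
    (h : Close ε X) (hε : ε ≤ 1) (i j : n) : ‖X i j‖ ≤ 1 := by
  rw [← sub_add_cancel (X i j) (if i = j then 1 else 0)]
  refine (IsUltrametricDist.norm_add_le_max _ _).trans (max_le ((h i j).trans hε) ?_)
  split_ifs <;> simp

theorem norm_mul_apply_le {k m n : Type*} [Fintype m] {X : Matrix k m ℚ_[p]}
    {Y : Matrix m n ℚ_[p]} {a b : ℝ} (ha : 0 ≤ a) (hb : 0 ≤ b) (hX : ∀ i j, ‖X i j‖ ≤ a)
    (hY : ∀ i j, ‖Y i j‖ ≤ b) (i : k) (j : n) : ‖(X * Y) i j‖ ≤ a * b := by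
  rw [Matrix.mul_apply]
  refine IsUltrametricDist.norm_sum_le_of_forall_le_of_nonneg (mul_nonneg ha hb) fun c _ => ?_
  rw [norm_mul]
  exact mul_le_mul (hX _ _) (hY _ _) (norm_nonneg _) ha

theorem close_one {n : Type*} [DecidableEq n] {ε : ℝ} (h0 : 0 ≤ ε) :
    Close ε (1 : Matrix n n ℚ_[p]) := fun i j => by
  simpa [Matrix.one_apply] using h0

theorem Close.mul {n : Type*} [Fintype n] [DecidableEq n] {ε : ℝ} (h0 : 0 ≤ ε) (h1 : ε ≤ 1)
    {X Y : Matrix n n ℚ_[p]} (hX : Close ε X) (hY : Close ε Y) : Close ε (X * Y) := by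
  rw [close_iff]
  intro i j
  rw [show X * Y - 1 = (X - 1) * Y + (Y - 1) by rw [Matrix.sub_mul, Matrix.one_mul]; abel,
    Matrix.add_apply]
  refine (IsUltrametricDist.norm_add_le_max _ _).trans (max_le ?_ (hY i j))
  have := norm_mul_apply_le h0 zero_le_one (close_iff.1 hX) (hY.norm_le_one h1) i j
  rwa [mul_one] at this

/-- A matrix congruent to `1` has an integral lift, whose determinant reduces to `1` modulo `p`. -/
theorem Close.exists_lift {n : Type*} [Fintype n] [DecidableEq n] {ε : ℝ} (h1 : ε < 1)
    {X : Matrix n n ℚ_[p]} (hX : Close ε X) :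
    ∃ Y : Matrix n n ℤ_[p], X = Y.map (PadicInt.Coe.ringHom) ∧ ‖Y.det - 1‖ < 1 := by
  let Y : Matrix n n ℤ_[p] := Matrix.of fun i j => ⟨X i j, hX.norm_le_one h1.le i j⟩
  refine ⟨Y, by ext i j; rfl, ?_⟩
  have hY : Y.map (PadicInt.toZMod : ℤ_[p] →+* ZMod p) = 1 := by
    ext i j
    have hmem : Y i j - (if i = j then 1 else 0) ∈ RingHom.ker (PadicInt.toZMod (p := p)) := by
      rw [PadicInt.ker_toZMod, IsLocalRing.mem_maximalIdeal, PadicInt.mem_nonunits,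
        PadicInt.norm_def]
      refine lt_of_le_of_lt (le_of_eq ?_) ((hX i j).trans_lt h1)
      congr 1
      split_ifs
      · exact PadicInt.coe_sub _ _
      · exact PadicInt.coe_sub _ _
    rw [RingHom.mem_ker, map_sub, sub_eq_zero] at hmem
    rw [Matrix.map_apply, hmem, Matrix.one_apply]
    split_ifs <;> simp
  have hdet : Y.det - 1 ∈ RingHom.ker (PadicInt.toZMod (p := p)) := by
    rw [RingHom.mem_ker, map_sub, RingHom.map_det, RingHom.mapMatrix_apply, hY, Matrix.det_one,
      map_one, sub_self]
  rwa [PadicInt.ker_toZMod, IsLocalRing.mem_maximalIdeal, PadicInt.mem_nonunits] at hdet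

theorem Close.norm_det_sub_one {n : Type*} [Fintype n] [DecidableEq n] {ε : ℝ} (h1 : ε < 1)
    {X : Matrix n n ℚ_[p]} (hX : Close ε X) : ‖X.det - 1‖ < 1 := by
  obtain ⟨Y, rfl, hY⟩ := hX.exists_lift h1
  rw [← RingHom.mapMatrix_apply, ← RingHom.map_det]
  exact hY

theorem Close.isUnit_det {n : Type*} [Fintype n] [DecidableEq n] {ε : ℝ} (h1 : ε < 1)
    {X : Matrix n n ℚ_[p]} (hX : Close ε X) : IsUnit X.det := by
  refine isUnit_iff_ne_zero.2 fun h => ?_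
  have := hX.norm_det_sub_one h1
  simp [h] at this

theorem Close.norm_inv_le_one {n : Type*} [Fintype n] [DecidableEq n] {ε : ℝ} (h1 : ε < 1)
    {X : Matrix n n ℚ_[p]} (hX : Close ε X) (i j : n) : ‖X⁻¹ i j‖ ≤ 1 := by
  obtain ⟨Y, hYX, hY⟩ := hX.exists_lift h1
  have hu : IsUnit Y.det := by
    by_contra h
    rw [← mem_nonunits_iff, PadicInt.mem_nonunits] at h
    have := (PadicInt.nonarchimedean Y.det (-(Y.det - 1))).trans_lt
      (max_lt h (by rwa [norm_neg]))
    simp at this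
  have e : X⁻¹ = (Y⁻¹).map PadicInt.Coe.ringHom := by
    refine Matrix.inv_eq_left_inv ?_
    rw [hYX, ← Matrix.map_mul, Matrix.nonsing_inv_mul Y hu]
    exact Matrix.map_one _ (map_zero _) (map_one _)
  rw [e, Matrix.map_apply]
  exact (Y⁻¹ i j).2

theorem Close.inv {n : Type*} [Fintype n] [DecidableEq n] {ε : ℝ} (h0 : 0 ≤ ε) (h1 : ε < 1)
    {X : Matrix n n ℚ_[p]} (hX : Close ε X) : Close ε X⁻¹ := by
  have hint := hX.norm_inv_le_one h1
  have e : X⁻¹ - 1 = X⁻¹ * (1 - X) := by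
    rw [Matrix.mul_sub, Matrix.nonsing_inv_mul X (hX.isUnit_det h1), Matrix.mul_one]
  have hX' : ∀ i j, ‖(1 - X) i j‖ ≤ ε := fun i j => by
    rw [Matrix.sub_apply, norm_sub_rev]; exact hX i j
  rw [close_iff, e]
  intro i j
  have := norm_mul_apply_le zero_le_one h0 hint hX' i j
  rwa [one_mul] at this

/-- An isometry of the antidiagonal form has determinant `±1`; congruence to the identity modulo
the odd prime `p` excludes `-1`. -/
theorem so2l1_of_close {l : ℕ} {ε : ℝ} (h1 : ε < 1) (h2 : ‖(2 : ℚ_[p])‖ = 1)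
    {X : Matrix (Fin (2*l+1)) (Fin (2*l+1)) ℚ_[p]}
    (hX : Xᵀ * Jmat ℚ_[p] (2*l+1) * X = Jmat ℚ_[p] (2*l+1)) (hc : Close ε X) : SO2l1 l X := by
  refine ⟨?_, hX⟩
  have hJ : (Jmat ℚ_[p] (2*l+1)).det ≠ 0 := fun h => by
    have := congrArg Matrix.det (jmat_mul_self (F := ℚ_[p]) (2*l+1))
    rw [Matrix.det_mul, h, Matrix.det_one, mul_zero] at this
    exact zero_ne_one this
  have h := congrArg Matrix.det hX
  rw [Matrix.det_mul, Matrix.det_mul, Matrix.det_transpose] at h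
  have hsq : (X.det - 1) * (X.det + 1) = 0 := by
    apply mul_left_cancel₀ hJ
    linear_combination h
  rcases mul_eq_zero.1 hsq with h | h
  · linear_combination h
  · have hn := hc.norm_det_sub_one h1
    rw [show X.det - 1 = -2 by linear_combination h, norm_neg, h2] at hn
    exact absurd hn (lt_irrefl _)

theorem isom_mul {l : ℕ} {X Y : Matrix (Fin (2*l+1)) (Fin (2*l+1)) ℚ_[p]}
    (hX : Xᵀ * Jmat ℚ_[p] (2*l+1) * X = Jmat ℚ_[p] (2*l+1))
    (hY : Yᵀ * Jmat ℚ_[p] (2*l+1) * Y = Jmat ℚ_[p] (2*l+1)) :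
    (X * Y)ᵀ * Jmat ℚ_[p] (2*l+1) * (X * Y) = Jmat ℚ_[p] (2*l+1) := by
  calc _ = Yᵀ * (Xᵀ * Jmat ℚ_[p] (2*l+1) * X) * Y := by
        simp only [Matrix.transpose_mul, Matrix.mul_assoc]
    _ = _ := by rw [hX, hY]

theorem Close.ll {l : ℕ} {ε : ℝ} (h0 : 0 ≤ ε) (h1 : ε < 1) {A : Matrix (Fin l) (Fin l) ℚ_[p]}
    (hA : Close ε A) : Close ε (llMat l A) := by
  have hB := hA.inv h0 h1
  intro i j
  obtain ⟨a, rfl⟩ | rfl | ⟨a, rfl⟩ := block_cases i <;>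
  obtain ⟨b, rfl⟩ | rfl | ⟨b, rfl⟩ := block_cases j <;>
  simp only [ll_lo_lo, ll_lo_mid, ll_lo_hi, ll_mid_lo, ll_mid_mid, ll_mid_hi, ll_hi_lo, ll_hi_mid,
    ll_hi_hi, lo_inj, hi_inj, lo_ne_mid, lo_ne_hi, hi_ne_mid,
    (lo_ne_mid _).symm, (hi_ne_mid _).symm, (lo_ne_hi _ _).symm, if_true, if_false, sub_self,
    norm_zero, h0]
  · exact hA a b
  · have := hB b.rev a.rev
    simpa only [Fin.rev_inj, eq_comm] using this

/-- Conjugation by `Mmat` and deletion of the middle row and column are integral, so congruence of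
`jmap l ρ k` to the identity forces that of `k`. -/
theorem km_of_jmap {l : ℕ} (hl : 2 ≤ l) (h2 : ‖(2 : ℚ_[p])‖ = 1) {ρ : ℚ_[p]} (hρ : ‖ρ‖ = 1)
    {m : ℕ} {k : Matrix (Fin (2*l)) (Fin (2*l)) ℚ_[p]} (hk : KmOdd p l m (jmap l ρ k)) :
    Km p l m ρ k := by
  have h20 : (2 : ℚ_[p]) ≠ 0 := fun h => by simp [h] at h2
  have hρ0 : ρ ≠ 0 := fun h => by simp [h] at hρ
  refine ⟨so2l_of_jmap hl h20 hρ0 hk.1, fun i j => ?_⟩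
  have hM : ∀ i j, ‖Mmat ℚ_[p] l ρ i j‖ ≤ 1 := fun i j => by
    rw [mmat_apply hl h20]
    split_ifs <;> simp [h2, hρ]
  have hJ : ∀ i j, ‖Jmat ℚ_[p] (2*l+1) i j‖ ≤ 1 := fun i j => by
    rw [jmat_apply]; split_ifs <;> simp
  have hH : ∀ i j, ‖jhat l ρ i j‖ ≤ 1 := fun i j => by
    simp only [jhat, Matrix.of_apply]
    split_ifs <;> simp [hρ]
  have hP : ∀ i j, ‖(Mmat ℚ_[p] l ρ)⁻¹ i j‖ ≤ 1 := by
    intro i j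
    rw [mmat_inv hl h20 hρ0]
    simpa using norm_mul_apply_le zero_le_one (by norm_num) hJ
      (norm_mul_apply_le zero_le_one zero_le_one (X := (Mmat ℚ_[p] l ρ)ᵀ)
        (fun i j => hM j i) hH) i j
  have h0 : (0 : ℝ) ≤ (p : ℝ) ^ (-(m : ℤ)) := by positivity
  have e : hatg l k - 1 = Mmat ℚ_[p] l ρ * (jmap l ρ k - 1) * (Mmat ℚ_[p] l ρ)⁻¹ := by
    rw [hatg_of_jmap hl h20 hρ0, Matrix.mul_sub, Matrix.sub_mul, Matrix.mul_one,
      mmat_mul_inv hl h20 hρ0]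
  have hb := norm_mul_apply_le (by positivity) zero_le_one
    (norm_mul_apply_le zero_le_one h0 hM (Y := jmap l ρ k - 1) hk.2) hP
    ((mid l).succAbove i) ((mid l).succAbove j)
  rw [← e, Matrix.sub_apply, hatg_succ, Matrix.one_apply] at hb
  simpa only [Fin.succAbove_right_inj, one_mul, mul_one] using hb

theorem eps_nonneg (p m : ℕ) : (0 : ℝ) ≤ (p : ℝ) ^ (-(m : ℤ)) := by positivity

theorem eps_lt_one (p : ℕ) [Fact p.Prime] {m : ℕ} (hm : 1 ≤ m) : (p : ℝ) ^ (-(m : ℤ)) < 1 :=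
  zpow_lt_one_of_neg₀ (by exact_mod_cast (Fact.out : p.Prime).one_lt) (by omega)

theorem norm_two (hp : p ≠ 2) : ‖(2 : ℚ_[p])‖ = 1 := by
  have h := (Padic.norm_natCast_eq_one_iff (p := p) (n := 2)).2
    ((Nat.coprime_primes Fact.out Nat.prime_two).2 hp)
  exact_mod_cast h

theorem KmOdd.mul {l m : ℕ} (hm : 1 ≤ m) (h2 : ‖(2 : ℚ_[p])‖ = 1)
    {X Y : Matrix (Fin (2*l+1)) (Fin (2*l+1)) ℚ_[p]} (hX : KmOdd p l m X) (hY : KmOdd p l m Y) :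
    KmOdd p l m (X * Y) := by
  have hc := Close.mul (eps_nonneg p m) (eps_lt_one p hm).le hX.2 hY.2
  exact ⟨so2l1_of_close (eps_lt_one p hm) h2 (isom_mul hX.1.2 hY.1.2) hc, hc⟩

theorem kmOdd_ll {l m : ℕ} (hm : 1 ≤ m) (h2 : ‖(2 : ℚ_[p])‖ = 1)
    {A : Matrix (Fin l) (Fin l) ℚ_[p]} (hA : Close ((p : ℝ) ^ (-(m : ℤ))) A) :
    KmOdd p l m (llMat l A) := by
  have hc := hA.ll (eps_nonneg p m) (eps_lt_one p hm)
  exact ⟨so2l1_of_close (eps_lt_one p hm) h2 (ll_isom (hA.isUnit_det (eps_lt_one p hm))) hc, hc⟩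

/-! ### Block unipotent elements -/

theorem transv_apply {F : Type*} [Field F] {l : ℕ} (q : Fin (2*l+1)) (c : F)
    (u : Fin (2*l+1) → F) (i j : Fin (2*l+1)) : transv q c u i j =
      (if i = j then 1 else 0) +
        c * (u i * (if j = q.rev then 1 else 0) - (if i = q then 1 else 0) * u j.rev) := by
  rw [transv, Matrix.add_apply, Matrix.one_apply]
  rfl

theorem close_transv {l : ℕ} {ε : ℝ} (h0 : 0 ≤ ε) (q : Fin (2*l+1)) {c : ℚ_[p]} (hc : ‖c‖ ≤ 1)
    {u : Fin (2*l+1) → ℚ_[p]} (hu : ∀ i, ‖u i‖ ≤ ε) : Close ε (transv q c u) := by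
  intro i j
  rw [transv_apply, add_sub_cancel_left, norm_mul]
  refine (mul_le_of_le_one_left (norm_nonneg _) hc).trans ?_
  rw [sub_eq_add_neg]
  refine (IsUltrametricDist.norm_add_le_max _ _).trans (max_le ?_ ?_)
  · split_ifs <;> simp [h0, hu]
  · split_ifs <;> simp [h0, hu]

theorem block_lo {l : ℕ} (i : Fin l) : blockOf3 l (lo i : ℕ) = 0 := by
  simp [blockOf3, lo]
theorem block_mid (l : ℕ) : blockOf3 l (mid l : ℕ) = 1 := by
  simp [blockOf3, mid]
theorem block_hi {l : ℕ} (i : Fin l) : blockOf3 l (hi i : ℕ) = 2 := by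
  have h : l < (hi i : ℕ) := by simp only [hi]; omega
  rw [blockOf3, if_neg h.not_gt, if_neg h.ne']

theorem ll_of_block_ne {F : Type*} [Field F] {l : ℕ} (A : Matrix (Fin l) (Fin l) F)
    {i j : Fin (2*l+1)} (h : blockOf3 l (i : ℕ) ≠ blockOf3 l (j : ℕ)) : llMat l A i j = 0 := by
  obtain ⟨a, rfl⟩ | rfl | ⟨a, rfl⟩ := block_cases i <;>
  obtain ⟨b, rfl⟩ | rfl | ⟨b, rfl⟩ := block_cases j <;>
  simp only [block_lo, block_mid, block_hi, ne_eq, not_true_eq_false] at h <;>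
  simp only [ll_lo_mid, ll_lo_hi, ll_mid_lo, ll_mid_hi, ll_hi_lo, ll_hi_mid]

/-- The Levi subgroup normalises the opposite unipotent radical (block pattern only). -/
theorem bar_conj {F : Type*} [Field F] {l : ℕ} {A B : Matrix (Fin l) (Fin l) F} (hAB : A * B = 1)
    {v : Matrix (Fin (2*l+1)) (Fin (2*l+1)) F}
    (hv : ∀ i j : Fin (2*l+1), ¬ blockOf3 l (j : ℕ) < blockOf3 l (i : ℕ) →
      v i j = (if i = j then 1 else 0)) (i j : Fin (2*l+1))
    (hij : ¬ blockOf3 l (j : ℕ) < blockOf3 l (i : ℕ)) :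
    (llMat l A * v * llMat l B) i j = if i = j then 1 else 0 := by
  have e : llMat l A * v * llMat l B = llMat l A * (v - 1) * llMat l B + 1 := by
    rw [Matrix.mul_sub, Matrix.sub_mul, Matrix.mul_one, ll_mul, hAB, ll_one]
    abel
  rw [e, Matrix.add_apply, Matrix.one_apply, add_eq_right, Matrix.mul_apply]
  refine Finset.sum_eq_zero fun b _ => ?_
  by_cases hb : blockOf3 l (b : ℕ) = blockOf3 l (j : ℕ)
  · rw [Matrix.mul_apply, Finset.sum_eq_zero, zero_mul]
    intro a _
    by_cases ha : blockOf3 l (i : ℕ) = blockOf3 l (a : ℕ)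
    · rw [Matrix.sub_apply, hv a b (by rwa [hb, ← ha]), Matrix.one_apply, sub_self, mul_zero]
    · rw [ll_of_block_ne A ha, zero_mul]
  · rw [ll_of_block_ne B hb, mul_zero]

section wvec
variable {F : Type*} [Field F] {l : ℕ} (hl : 2 ≤ l) (ρ : F)

theorem wvec_lo (i : Fin l) : wvec l hl ρ (lo i) = if i = ⟨l - 1, by omega⟩ then 1 else 0 := by
  have hq1 : q1 l hl = lo ⟨l - 1, by omega⟩ := rfl
  have hq3 : q3 l hl = hi ⟨0, by omega⟩ := rfl
  simp only [wvec, hq1, hq3, lo_inj, lo_ne_hi, if_false]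

theorem wvec_mid : wvec l hl ρ (mid l) = 0 := by
  simp only [wvec, (q1_ne_mid hl).symm, (q3_ne_mid hl).symm, if_false]

theorem wvec_hi (i : Fin l) :
    wvec l hl ρ (hi i) = if i.rev = ⟨l - 1, by omega⟩ then ρ / 2 else 0 := by
  have hq1 : q1 l hl = lo ⟨l - 1, by omega⟩ := rfl
  have hq3 : q3 l hl = hi ⟨0, by omega⟩ := rfl
  simp only [wvec, hq1, hq3, hi_inj, (lo_ne_hi _ _).symm, if_false]
  congr 1
  simp only [Fin.ext_iff, Fin.val_rev, eq_iff_iff]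
  omega

variable (A : Matrix (Fin l) (Fin l) F)

theorem ll_wvec_lo (i : Fin l) : (llMat l A *ᵥ wvec l hl ρ) (lo i) = A i ⟨l - 1, by omega⟩ := by
  simp [Matrix.mulVec, dotProduct, sum_blocks, ll_lo_lo, ll_lo_mid, ll_lo_hi, wvec_lo]

theorem ll_wvec_mid : (llMat l A *ᵥ wvec l hl ρ) (mid l) = 0 := by
  simp [Matrix.mulVec, dotProduct, sum_blocks, ll_mid_lo, ll_mid_mid, ll_mid_hi, wvec_mid]

theorem ll_wvec_hi (i : Fin l) :
    (llMat l A *ᵥ wvec l hl ρ) (hi i) = A⁻¹ ⟨l - 1, by omega⟩ i.rev * (ρ / 2) := by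
  simp [Matrix.mulVec, dotProduct, sum_blocks, ll_hi_lo, ll_hi_mid, ll_hi_hi, wvec_hi]
  rw [← Equiv.sum_comp Fin.revPerm]
  simp
end wvec

/-- The mechanism behind both unipotent cases: the translate of `w = wvec` by `llMat l k'⁻¹` is
`w + u`, a transvection `v` sends `w` to `w + u`, and therefore `llMat l k' * v` fixes `w`. -/
theorem exists_of_transv {l m : ℕ} (hl : 2 ≤ l) (hm : 1 ≤ m) (h2 : ‖(2 : ℚ_[p])‖ = 1)
    {ρ : ℚ_[p]} (hρ : ‖ρ‖ = 1) {A : Matrix (Fin l) (Fin l) ℚ_[p]}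
    (hA : Close ((p : ℝ) ^ (-(m : ℤ))) A) (q : Fin (2*l+1)) (c : ℚ_[p]) (hc : ‖c‖ ≤ 1)
    (hq : q = q1 l hl ∨ q = q3 l hl) (hcw : c * wvec l hl ρ q.rev = 1)
    (u : Fin (2*l+1) → ℚ_[p]) (hu : llMat l A⁻¹ *ᵥ wvec l hl ρ = wvec l hl ρ + u)
    (huu : ∀ i, u i * u i.rev = 0) (hu1 : u (q1 l hl) = 0) (hu3 : u (q3 l hl) = 0) :
    KmOdd p l m (transv q c u) ∧ ∃ k, jmap l ρ k = llMat l A * transv q c u ∧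
      Km p l m ρ k ∧ KmOdd p l m (jmap l ρ k) := by
  have h20 : (2 : ℚ_[p]) ≠ 0 := fun h => by simp [h] at h2
  have hρ0 : ρ ≠ 0 := fun h => by simp [h] at hρ
  have hε0 := eps_nonneg p m
  have hε1 := eps_lt_one p hm
  have hAu := hA.isUnit_det hε1
  have hw : ∀ i, ‖wvec l hl ρ i‖ ≤ 1 := fun i => by
    simp only [wvec]; split_ifs <;> simp [hρ, h2]
  have hun : ∀ i, ‖u i‖ ≤ (p : ℝ) ^ (-(m : ℤ)) := fun i => by
    have e : u = (llMat l A⁻¹ - 1) *ᵥ wvec l hl ρ := by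
      rw [Matrix.sub_mulVec, hu, Matrix.one_mulVec, add_sub_cancel_left]
    rw [e]
    simp only [Matrix.mulVec, dotProduct]
    refine IsUltrametricDist.norm_sum_le_of_forall_le_of_nonneg hε0 fun c _ => ?_
    rw [norm_mul]
    exact (mul_le_mul ((hA.inv hε0 hε1).ll hε0 hε1 i c) (hw c) (norm_nonneg _) hε0).trans
      (mul_one _).le
  have hqr : u q.rev = 0 := by
    rcases hq with rfl | rfl
    · rw [rev_q1, hu3]
    · rw [rev_q3, hu1]
  have hqq : q ≠ q.rev := by
    rcases hq with rfl | rfl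
    · rw [rev_q1]; exact q1_ne_q3 hl
    · rw [rev_q3]; exact (q1_ne_q3 hl).symm
  have hT := transv_isom q hqq c u huu hqr
  have hTc := close_transv hε0 q hc hun
  have hv : KmOdd p l m (transv q c u) := ⟨so2l1_of_close hε1 h2 hT hTc, hTc⟩
  refine ⟨hv, ?_⟩
  have hfix : (llMat l A * transv q c u) *ᵥ wvec l hl ρ = wvec l hl ρ := by
    rw [← Matrix.mulVec_mulVec, transv_mulVec q c u _ hcw, ← hu, Matrix.mulVec_mulVec, ll_mul,
      Matrix.mul_nonsing_inv A hAu, ll_one, Matrix.one_mulVec]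
    intro i
    simp only [wvec]
    split_ifs with h1 h3
    · rw [h1, rev_q1, hu3, zero_mul]
    · rw [h3, rev_q3, hu1, zero_mul]
    · rw [mul_zero]
  have hK := (kmOdd_ll hm h2 hA).mul hm h2 hv
  obtain ⟨k, hk⟩ := exists_jmap hl h20 hρ0 hK.1.2 hfix
  rw [← hk] at hK
  exact ⟨k, hk, km_of_jmap hl h2 hρ hK, hK⟩

/-! ### The three cases -/

/-- Of the upper unipotent hypothesis only the shape of the last row of `A` matters; the transvection
is then built on `e_l`. -/
theorem upper_case {l m : ℕ} (hl : 2 ≤ l) (hm : 1 ≤ m) (h2 : ‖(2 : ℚ_[p])‖ = 1)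
    {ρ : ℚ_[p]} (hρ : ‖ρ‖ = 1) {A : Matrix (Fin l) (Fin l) ℚ_[p]}
    (hA : Close ((p : ℝ) ^ (-(m : ℤ))) A)
    (hrow : ∀ j, A ⟨l - 1, by omega⟩ j = if j = ⟨l - 1, by omega⟩ then 1 else 0) :
    ∃ k v, KmPrime p l m ρ k ∧ VlMem l v ∧ KmOdd p l m v ∧ jmap l ρ k = llMat l A * v := by
  have hAu := hA.isUnit_det (eps_lt_one p hm)
  have hlast : A⁻¹ ⟨l - 1, by omega⟩ ⟨l - 1, by omega⟩ = 1 := by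
    have := congrFun (congrFun (Matrix.mul_nonsing_inv A hAu) ⟨l - 1, by omega⟩) ⟨l - 1, by omega⟩
    simpa [Matrix.mul_apply, hrow] using this
  set u := llMat l A⁻¹ *ᵥ wvec l hl ρ - wvec l hl ρ with hu
  have umid : u (mid l) = 0 := by
    rw [hu, Pi.sub_apply, ll_wvec_mid, wvec_mid, sub_self]
  have uhi : ∀ i, u (hi i) = 0 := fun i => by
    rw [hu, Pi.sub_apply, ll_wvec_hi, wvec_hi, Matrix.nonsing_inv_nonsing_inv A hAu, hrow]
    split_ifs <;> simp
  have h1 : u (q1 l hl) = 0 := by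
    change u (lo ⟨l - 1, by omega⟩) = 0
    rw [hu, Pi.sub_apply, ll_wvec_lo, wvec_lo, if_pos rfl, hlast, sub_self]
  have h3 : u (q3 l hl) = 0 := uhi ⟨0, by omega⟩
  have hρ0 : ρ / 2 ≠ 0 := fun h => by
    have := congrArg norm h
    simp [hρ, h2] at this
  obtain ⟨hv, k, hk, hK, hK'⟩ := exists_of_transv hl hm h2 hρ hA (q1 l hl) (ρ / 2)⁻¹
    (by simp [hρ, h2]) (Or.inl rfl)
    (by rw [rev_q1, wvec, if_neg (q1_ne_q3 hl).symm, if_pos rfl, inv_mul_cancel₀ hρ0]) u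
    (by rw [hu, add_sub_cancel]) (fun i => by
      obtain ⟨a, rfl⟩ | rfl | ⟨a, rfl⟩ := block_cases i
      · rw [rev_lo, uhi, mul_zero]
      · rw [umid, zero_mul]
      · rw [uhi, zero_mul]) h1 h3
  have hV : VlMem l (transv (q1 l hl) (ρ / 2)⁻¹ u) := by
    refine ⟨hv.1, fun i j hij => ?_⟩
    rw [transv_apply, add_eq_left, rev_q1]
    have hq1 : q1 l hl = lo ⟨l - 1, by omega⟩ := rfl
    have hq3 : q3 l hl = hi ⟨0, by omega⟩ := rfl
    rw [hq1, hq3]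
    obtain ⟨a, rfl⟩ | rfl | ⟨a, rfl⟩ := block_cases i <;>
    obtain ⟨b, rfl⟩ | rfl | ⟨b, rfl⟩ := block_cases j <;>
    simp [block_lo, block_mid, block_hi] at hij <;>
    simp [rev_lo, rev_mid, uhi, umid, lo_ne_hi, (lo_ne_hi _ _).symm, (lo_ne_mid _).symm,
      (hi_ne_mid _).symm]
  exact ⟨k, _, ⟨hK, Or.inl ⟨⟨A, _, hAu.ne_zero, hV, hk⟩, hK'⟩⟩, hV, hv, hk⟩

/-- Of the lower unipotent hypothesis only the shape of the last column of `A` matters; the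
transvection is then built on `e_{l+2}`. -/
theorem lower_case {l m : ℕ} (hl : 2 ≤ l) (hm : 1 ≤ m) (h2 : ‖(2 : ℚ_[p])‖ = 1)
    {ρ : ℚ_[p]} (hρ : ‖ρ‖ = 1) {A : Matrix (Fin l) (Fin l) ℚ_[p]}
    (hA : Close ((p : ℝ) ^ (-(m : ℤ))) A)
    (hcol : ∀ i, A i ⟨l - 1, by omega⟩ = if i = ⟨l - 1, by omega⟩ then 1 else 0) :
    ∃ k v, KmPrime p l m ρ k ∧ VlBarMem l v ∧ KmOdd p l m v ∧ jmap l ρ k = llMat l A * v := by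
  have hAu := hA.isUnit_det (eps_lt_one p hm)
  have hlast : ∀ i, A⁻¹ i ⟨l - 1, by omega⟩ = if i = ⟨l - 1, by omega⟩ then 1 else 0 := fun i => by
    have := congrFun (congrFun (Matrix.nonsing_inv_mul A hAu) i) ⟨l - 1, by omega⟩
    simpa [Matrix.mul_apply, hcol, Matrix.one_apply] using this
  set u := llMat l A⁻¹ *ᵥ wvec l hl ρ - wvec l hl ρ with hu
  have umid : u (mid l) = 0 := by
    rw [hu, Pi.sub_apply, ll_wvec_mid, wvec_mid, sub_self]
  have ulo : ∀ i, u (lo i) = 0 := fun i => by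
    rw [hu, Pi.sub_apply, ll_wvec_lo, wvec_lo, hlast, sub_self]
  have h1 : u (q1 l hl) = 0 := ulo ⟨l - 1, by omega⟩
  have h3 : u (q3 l hl) = 0 := by
    have e : (⟨0, by omega⟩ : Fin l).rev = ⟨l - 1, by omega⟩ := rfl
    change u (hi ⟨0, by omega⟩) = 0
    rw [hu, Pi.sub_apply, ll_wvec_hi, wvec_hi, Matrix.nonsing_inv_nonsing_inv A hAu, e, hcol,
      if_pos rfl, if_pos rfl, one_mul, sub_self]
  obtain ⟨hv, k, hk, hK, hK'⟩ := exists_of_transv hl hm h2 hρ hA (q3 l hl) 1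
    (by simp) (Or.inr rfl)
    (by rw [rev_q3, wvec, if_pos rfl, one_mul]) u
    (by rw [hu, add_sub_cancel]) (fun i => by
      obtain ⟨a, rfl⟩ | rfl | ⟨a, rfl⟩ := block_cases i
      · rw [ulo, zero_mul]
      · rw [umid, zero_mul]
      · rw [rev_hi, ulo, mul_zero]) h1 h3
  have hV : VlBarMem l (transv (q3 l hl) 1 u) := by
    refine ⟨hv.1, fun i j hij => ?_⟩
    rw [transv_apply, add_eq_left, rev_q3]
    have hq1 : q1 l hl = lo ⟨l - 1, by omega⟩ := rfl
    have hq3 : q3 l hl = hi ⟨0, by omega⟩ := rfl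
    rw [hq1, hq3]
    obtain ⟨a, rfl⟩ | rfl | ⟨a, rfl⟩ := block_cases i <;>
    obtain ⟨b, rfl⟩ | rfl | ⟨b, rfl⟩ := block_cases j <;>
    simp [block_lo, block_mid, block_hi] at hij <;>
    simp [rev_hi, rev_mid, ulo, umid, lo_ne_hi, (lo_ne_hi _ _).symm, (lo_ne_mid _).symm,
      (hi_ne_mid _).symm]
  have hAA := Matrix.mul_nonsing_inv A hAu
  have hV' : VlBarMem l (llMat l A * transv (q3 l hl) 1 u * llMat l A⁻¹) :=
    ⟨(((kmOdd_ll hm h2 hA).mul hm h2 hv).mul hm h2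
      (kmOdd_ll hm h2 (hA.inv (eps_nonneg p m) (eps_lt_one p hm)))).1, bar_conj hAA hV.2⟩
  refine ⟨k, _, ⟨hK, Or.inr ⟨⟨A, _, hAu.ne_zero, hV', ?_⟩, hK'⟩⟩, hV, hv, hk⟩
  rw [Matrix.mul_assoc, ll_mul, Matrix.nonsing_inv_mul A hAu, ll_one, Matrix.mul_one, hk]

theorem levi_case {l m : ℕ} (hl : 2 ≤ l) (hm : 1 ≤ m) (h2 : ‖(2 : ℚ_[p])‖ = 1)
    {ρ : ℚ_[p]} (hρ : ‖ρ‖ = 1) {a : Matrix (Fin (l-1)) (Fin (l-1)) ℚ_[p]}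
    (ha : Close ((p : ℝ) ^ (-(m : ℤ))) a) :
    KmPrime p l m ρ (dmat l a) ∧ jmap l ρ (dmat l a) = llMat l (augMat l a) := by
  have h20 : (2 : ℚ_[p]) ≠ 0 := fun h => by simp [h] at h2
  have hρ0 : ρ ≠ 0 := fun h => by simp [h] at hρ
  have hε1 := eps_lt_one p hm
  have hj := jmap_dmat hl h20 hρ0 (ha.isUnit_det hε1)
  have hc : Close ((p : ℝ) ^ (-(m : ℤ))) (augMat l a) := fun i j => by
    simp only [augMat, Matrix.of_apply]
    split_ifs with h h' h'
    · rw [ent_lt _ h.1 h.2]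
      simpa [Fin.ext_iff, h'] using ha ⟨i, h.1⟩ ⟨j, h.2⟩
    · rw [ent_lt _ h.1 h.2]
      have h'' : (i : ℕ) ≠ j := fun e => h' (Fin.ext e)
      simpa [h''] using ha ⟨i, h.1⟩ ⟨j, h.2⟩
    · simp
    · simp
  have hK : KmOdd p l m (jmap l ρ (dmat l a)) := hj ▸ kmOdd_ll hm h2 hc
  refine ⟨⟨km_of_jmap hl h2 hρ hK, Or.inl ⟨⟨augMat l a, 1, (hc.isUnit_det hε1).ne_zero,
    ⟨⟨Matrix.det_one, by simp⟩, fun i j _ => Matrix.one_apply⟩, ?_⟩, hK⟩⟩, hj⟩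
  rw [Matrix.mul_one, hj]

end Padic

/-- Lemma 7.3. -/
theorem statement18 (p : ℕ) [Fact p.Prime] (hp : p ≠ 2) (l : ℕ) (hl : 2 ≤ l)
    (ρ : ℚ_[p]) (hρ1 : ‖ρ‖ = 1) (hρ : ∀ x : ℚ_[p], x * x ≠ ρ)
    (m : ℕ) (hm : 1 ≤ m) :
    -- (1) upper unipotent `k' ∈ K⁺`
    (∀ k' : Matrix (Fin l) (Fin l) ℚ_[p],
      (∀ i j : Fin l, (j : ℕ) < (i : ℕ) → k' i j = 0) → (∀ i, k' i i = 1) →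
      (∀ i j : Fin l, ‖k' i j - (if i = j then 1 else 0)‖ ≤ (p : ℝ) ^ (-(m : ℤ))) →
      ∃ (k : Matrix (Fin (2*l)) (Fin (2*l)) ℚ_[p])
        (v : Matrix (Fin (2*l+1)) (Fin (2*l+1)) ℚ_[p]),
        KmPrime p l m ρ k ∧ VlMem l v ∧ KmOdd p l m v ∧
        jmap l ρ k = llMat l k' * v) ∧
    -- (2) lower unipotent `k' ∈ K⁻`
    (∀ k' : Matrix (Fin l) (Fin l) ℚ_[p],
      (∀ i j : Fin l, (i : ℕ) < (j : ℕ) → k' i j = 0) → (∀ i, k' i i = 1) →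
      (∀ i j : Fin l, ‖k' i j - (if i = j then 1 else 0)‖ ≤ (p : ℝ) ^ (-(m : ℤ))) →
      ∃ (k : Matrix (Fin (2*l)) (Fin (2*l)) ℚ_[p])
        (v : Matrix (Fin (2*l+1)) (Fin (2*l+1)) ℚ_[p]),
        KmPrime p l m ρ k ∧ VlBarMem l v ∧ KmOdd p l m v ∧
        jmap l ρ k = llMat l k' * v) ∧
    -- (3) the Levi part `diag(a,1,1,a*)`
    (∀ a : Matrix (Fin (l-1)) (Fin (l-1)) ℚ_[p],
      (∀ i j : Fin (l-1), ‖a i j - (if i = j then 1 else 0)‖ ≤ (p : ℝ) ^ (-(m : ℤ))) →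
      KmPrime p l m ρ (dmat l a) ∧ jmap l ρ (dmat l a) = llMat l (augMat l a)) := by
  have h2 : ‖(2 : ℚ_[p])‖ = 1 := norm_two hp
  refine ⟨fun k' htri hdiag hc => upper_case hl hm h2 hρ1 hc fun j => ?_,
    fun k' htri hdiag hc => lower_case hl hm h2 hρ1 hc fun i => ?_,
    fun a ha => levi_case hl hm h2 hρ1 ha⟩
  · split_ifs with h
    · rw [h, hdiag]
    · refine htri _ _ ?_
      have : (j : ℕ) ≠ l - 1 := fun e => h (Fin.ext e)
      change (j : ℕ) < l - 1
      omega
  · split_ifs with h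
    · rw [h, hdiag]
    · refine htri _ _ ?_
      have : (i : ℕ) ≠ l - 1 := fun e => h (Fin.ext e)
      change (i : ℕ) < l - 1
      omega
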